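/- Let R be a regular local ring and M, N finitely generated nonzero R-modules such that M ⊗_R N has finite length, Tor_1^R(M,N) = 0, and M, N are both Cohen–Macaulay. Then dim M + dim N = dim R. -/

import Mathlib

/-!
Let `x₁, …, x_d` be a regular system of parameters of `R`, let `e = dim M`, `e' = dim N`, and pick
regular sequences `y` on `M` and `z` on `N` of lengths `e` and `e'` with `M / yM` and `N / zN` of
finite length; these exist because `M` and `N` are Cohen–Macaulay. Both inequalities between `d`
and `e + e'` come from comparing the growth in `n` of lengths of truncations by `n`-th powers.
No homological dimension, intersection multiplicity or Auslander–Buchsbaum formula enters.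

*Moving `M`, which gives `d ≤ e + e'`* (`exists_pow_le_mul_pow_add`). Let `D = R[ε₁, …, ε_d]` and
let `S` be its completion at `(m, ε)`. Using a coefficient field one constructs a ring homomorphism
`τ : R → S` with `τ xᵢ = xᵢ + εᵢ` and `τ r ≡ r` modulo `ε` (`exists_translation`). Put
`Tₙ = D ⊗ M / (ε₁ⁿ, …, ε_dⁿ)` and view `S ⊗_D Tₙ` as an `R`-module through `τ`: it is a family of
translates of `M` over a base of length `n ^ d`.

* Since the `εᵢ` form a regular sequence on `D ⊗ M`, the module `Tₙ` is an iterated extension of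
  `n ^ d` copies of `M`. Each copy becomes, over the flat `D`-algebra `S`, a module which has
  vanishing `Tor₁` against `N`, so lengths of tensor products with `N` add up and
  `length_S ((S ⊗ Tₙ) ⊗_{R, τ} N) ≥ n ^ d` (`pow_le_length_thick`). This is the only place where
  `Tor₁(M, N) = 0` is used.
* The ideal `ann M + ann N` contains a power of `m`, and `τ (ann M)` acts on `S ⊗ Tₙ` by elements
  that are nilpotent of order `O(n)`. Hence `N` may be replaced by `N / z^{[cn]} N`, whose length is
  `O(n ^ e')`, and filtering this module reduces `N` to the residue field `k`. Modulo `τ m` one has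
  `εᵢ = -xᵢ`, so `(S ⊗ Tₙ) ⊗_{R, τ} k` is no longer than `M / x^{[n]} M` (`length_thick_residue_le`),
  a module of length `O(n ^ e)`.

Together `n ^ d ≤ C * n ^ (e + e')` for all `n`.

*Reduction to the diagonal, which gives `e + e' ≤ d`* (`exists_pow_add_le_mul_pow`). The modules
`V = M / y^{[n]} M` and `W = N / z^{[n]} N` have lengths at least `n ^ e` and `n ^ e'` by regularity,
and are killed by `m ^ a` with `a = O(n)`. Over a coefficient field `k` of `R / m ^ a`, the module
`V ⊗_R W` is the quotient of `V ⊗_k W` by the `d` nilpotent operators `xᵢ ⊗ 1 - 1 ⊗ xᵢ`, of order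
at most `2a`. Hence `length V * length W ≤ (2a) ^ d * length (V ⊗_R W)`, where the last factor is
bounded by the length of `M ⊗ N`.
-/

open CategoryTheory TensorProduct

/-- The (Krull) dimension of a module: the Krull dimension of `R / ann(M)`. -/
noncomputable def moduleDim (R M : Type) [CommRing R] [AddCommGroup M] [Module R M] :
    WithBot (WithTop ℕ) :=
  ringKrullDim (R ⧸ Module.annihilator R M)

/-- The depth of a module over a local ring: the supremum of the lengths of
`M`-regular sequences contained in the maximal ideal. -/
noncomputable def moduleDepth (R M : Type) [CommRing R] [IsLocalRing R] [AddCommGroup M]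
    [Module R M] : WithBot (WithTop ℕ) :=
  sSup {d | ∃ rs : List R, (∀ r ∈ rs, r ∈ IsLocalRing.maximalIdeal R) ∧
    RingTheory.Sequence.IsRegular M rs ∧ d = (rs.length : WithBot (WithTop ℕ))}

/-- A finitely generated module over a local ring is Cohen–Macaulay if its depth
equals its dimension. -/
def IsCohenMacaulayMod (R M : Type) [CommRing R] [IsLocalRing R] [AddCommGroup M]
    [Module R M] : Prop :=
  moduleDepth R M = moduleDim R M

/-- A finite free resolution `0 → F_n → ⋯ → F_1 → F_0 → M → 0`, recorded via matrices. -/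
structure FiniteFreeResolution (R M : Type) [CommRing R] [AddCommGroup M] [Module R M]
    (n : ℕ) where
  r : ℕ → ℕ
  top : ∀ i, n < i → r i = 0
  mat : ∀ i, Fin (r (i + 1)) → Fin (r i) → R
  augm : Fin (r 0) → M
  augm_surj : ∀ m : M, ∃ z : Fin (r 0) → R, ∑ a, z a • augm a = m
  exact_zero : ∀ z : Fin (r 0) → R, (∑ a, z a • augm a = 0) ↔
    ∃ w : Fin (r 1) → R, (fun b => ∑ a, mat 0 a b * w a) = z
  exact_succ : ∀ i (z : Fin (r (i + 1)) → R),
    ((fun b => ∑ a, mat i a b * z a) = (0 : Fin (r i) → R)) ↔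
      ∃ w : Fin (r (i + 2)) → R, (fun c => ∑ a, mat (i + 1) a c * w a) = z

/-- The projective dimension of a module (over a local ring, where projective = free for
finitely generated modules): the least length of a finite free resolution. -/
noncomputable def projDim (R M : Type) [CommRing R] [AddCommGroup M] [Module R M] :
    WithBot (WithTop ℕ) :=
  sInf {d | ∃ n : ℕ, Nonempty (FiniteFreeResolution R M n) ∧ d = (n : WithBot (WithTop ℕ))}

/-- A regular local ring: a Noetherian local ring whose maximal ideal is generated by
`dim R` elements. -/
def IsRegularLocal (R : Type) [CommRing R] : Prop :=
  IsNoetherianRing R ∧ ∃ h : IsLocalRing R, ∃ s : Finset R,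
    Ideal.span (s : Set R) = @IsLocalRing.maximalIdeal R _ h ∧
    (s.card : WithBot (WithTop ℕ)) = ringKrullDim R

/-! ### Growth of quotients by powers of a regular sequence -/

section
open Pointwise

/-- A predicate `P V a`, on modules `V` and natural numbers `a`, which is invariant under isomorphism
and additive in `a` along short exact sequences. The example to keep in mind is
`a ≤ length V`. -/
structure GrowthClass (U : Type) [CommRing U]
    (P : ∀ (V : Type) [AddCommGroup V] [Module U V], ℕ → Prop) : Prop where
  iso : ∀ (V W : Type) [AddCommGroup V] [Module U V] [AddCommGroup W] [Module U W] (a : ℕ),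
    (V ≃ₗ[U] W) → P V a → P W a
  ext : ∀ (V₁ V₂ V₃ : Type) [AddCommGroup V₁] [Module U V₁] [AddCommGroup V₂] [Module U V₂]
    [AddCommGroup V₃] [Module U V₃] (f : V₁ →ₗ[U] V₂) (g : V₂ →ₗ[U] V₃) (a b : ℕ),
    Function.Injective f → Function.Exact f g → Function.Surjective g →
    P V₁ a → P V₃ b → P V₂ (a + b)

/-- `RegTower P rs V a` says that `rs` is a weakly regular sequence on `V` and that `P · a` holds for
the iterated quotient of `V` by the members of `rs`. Spelled out recursively, this is again a
property closed under extensions. -/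
def RegTower {U : Type} [CommRing U]
    (P : ∀ (V : Type) [AddCommGroup V] [Module U V], ℕ → Prop) :
    List U → ∀ (V : Type) [AddCommGroup V] [Module U V], ℕ → Prop
  | [], V, _, _, a => P V a
  | r :: rs, V, _, _, a => IsSMulRegular V r ∧ RegTower P rs (QuotSMulTop r V) a

section
variable {U : Type} [CommRing U]
    {P : ∀ (V : Type) [AddCommGroup V] [Module U V], ℕ → Prop}

lemma QuotSMulTop.map_injective_of_exact {V₁ V₂ V₃ : Type} [AddCommGroup V₁] [Module U V₁]
    [AddCommGroup V₂] [Module U V₂] [AddCommGroup V₃] [Module U V₃] (r : U)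
    {f : V₁ →ₗ[U] V₂} {g : V₂ →ₗ[U] V₃} (hf : Function.Injective f) (hfg : Function.Exact f g)
    (h : IsSMulRegular V₃ r) : Function.Injective (QuotSMulTop.map r f) := by
  have h0 : Function.Exact (0 : V₁ →ₗ[U] V₁) f := by
    rw [LinearMap.exact_zero_iff_injective]; exact hf
  have := QuotSMulTop.map_first_exact_on_four_term_exact_of_isSMulRegular_last h0 hfg h
  rw [_root_.map_zero] at this
  exact (LinearMap.exact_zero_iff_injective _ _).1 this

/-- For fixed `rs`, having a regular tower is itself a growth class. This is what allows the powers
of the members of `rs` to be introduced one at a time. -/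
lemma RegTower.growthClass (hP : GrowthClass U P) (rs : List U) :
    GrowthClass U (fun V _ _ a => RegTower P rs V a) := by
  induction rs with
  | nil => exact hP
  | cons r rs ih =>
    constructor
    · intro V W _ _ _ _ a e h
      exact ⟨(e.isSMulRegular_congr r).1 h.1, ih.iso _ _ a (QuotSMulTop.congr r e) h.2⟩
    · intro V₁ V₂ V₃ _ _ _ _ _ _ f g a b hf hfg hg h₁ h₃
      refine ⟨isSMulRegular_of_range_eq_ker hf hfg.linearMap_ker_eq.symm h₁.1 h₃.1, ?_⟩
      exact ih.ext _ _ _ (QuotSMulTop.map r f) (QuotSMulTop.map r g) a b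
        (QuotSMulTop.map_injective_of_exact r hf hfg h₃.1) (QuotSMulTop.map_exact r hfg hg)
        (QuotSMulTop.map_surjective r hg) h₁.2 h₃.2

/-- One step of the filtration `V / r ^ (n + 1) ⊇ r ^ n V / r ^ (n + 1) ⊇ ⋯`. -/
lemma GrowthClass.quot_pow (hP : GrowthClass U P) {V : Type} [AddCommGroup V] [Module U V]
    {r : U} (hr : IsSMulRegular V r) {a : ℕ} (h : P (QuotSMulTop r V) a) (n : ℕ) :
    P (QuotSMulTop (r ^ (n + 1)) V) ((n + 1) * a) := by
  induction n with
  | zero =>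
    have e : r • (⊤ : Submodule U V) = r ^ (0 + 1) • ⊤ := by simp
    exact hP.iso _ _ _ (Submodule.quotEquivOfEq _ _ e) (by simpa using h)
  | succ n ih =>
    have hle : r ^ (n + 1) • (⊤ : Submodule U V) ≤
        (r ^ (n + 2) • (⊤ : Submodule U V)).comap (LinearMap.lsmul U V r) := by
      rintro x hx
      obtain ⟨y, -, rfl⟩ := (Submodule.mem_smul_pointwise_iff_exists _ _ _).1 hx
      refine (Submodule.mem_smul_pointwise_iff_exists _ _ _).2 ⟨y, trivial, ?_⟩
      simp only [LinearMap.lsmul_apply, smul_smul]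
      ring_nf
    have hle2 : r ^ (n + 2) • (⊤ : Submodule U V) ≤ r • ⊤ := by
      rintro x hx
      obtain ⟨y, -, rfl⟩ := (Submodule.mem_smul_pointwise_iff_exists _ _ _).1 hx
      refine (Submodule.mem_smul_pointwise_iff_exists _ _ _).2 ⟨r ^ (n + 1) • y, trivial, ?_⟩
      simp only [smul_smul]
      ring_nf
    have := hP.ext (QuotSMulTop (r ^ (n + 1)) V) (QuotSMulTop (r ^ (n + 2)) V) (QuotSMulTop r V)
      (Submodule.mapQ _ _ (LinearMap.lsmul U V r) hle) (Submodule.factor hle2)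
      ((n + 1) * a) a ?_ ?_ ?_ ih h
    · convert this using 1; ring
    · rw [injective_iff_map_eq_zero]
      intro x hx
      obtain ⟨x, rfl⟩ := Submodule.Quotient.mk_surjective _ x
      rw [Submodule.mapQ_apply, Submodule.Quotient.mk_eq_zero] at hx
      obtain ⟨y, -, hy⟩ := (Submodule.mem_smul_pointwise_iff_exists _ _ _).1 hx
      rw [Submodule.Quotient.mk_eq_zero]
      refine (Submodule.mem_smul_pointwise_iff_exists _ _ _).2 ⟨y, trivial, hr ?_⟩
      simp only [LinearMap.lsmul_apply] at hy
      simp only [← hy, smul_smul]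
      ring_nf
    · intro x
      obtain ⟨x, rfl⟩ := Submodule.Quotient.mk_surjective _ x
      constructor
      · intro hx
        rw [← Submodule.mkQ_apply, Submodule.factor_mk, Submodule.mkQ_apply,
          Submodule.Quotient.mk_eq_zero] at hx
        obtain ⟨y, -, hy⟩ := (Submodule.mem_smul_pointwise_iff_exists _ _ _).1 hx
        exact ⟨Submodule.Quotient.mk y, by simp [← hy]⟩
      · rintro ⟨y, hy⟩
        obtain ⟨y, rfl⟩ := Submodule.Quotient.mk_surjective _ y
        rw [← hy]
        rw [Submodule.mapQ_apply, ← Submodule.mkQ_apply, Submodule.factor_mk, Submodule.mkQ_apply,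
          Submodule.Quotient.mk_eq_zero]
        exact (Submodule.mem_smul_pointwise_iff_exists _ _ _).2 ⟨y, trivial, rfl⟩
    · exact Submodule.factor_surjective hle2

lemma RegTower.pow (hP : GrowthClass U P) (rs : List U) {V : Type} [AddCommGroup V] [Module U V]
    {a : ℕ} (h : RegTower P rs V a) (n : ℕ) :
    RegTower P (rs.map (· ^ (n + 1))) V ((n + 1) ^ rs.length * a) := by
  induction rs generalizing V with
  | nil => simpa using h
  | cons r rs ih =>
    refine ⟨h.1.pow _, ?_⟩
    have := (RegTower.growthClass hP (rs.map (· ^ (n + 1)))).quot_pow h.1 (ih h.2) n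
    convert this using 1
    rw [List.length_cons, pow_succ]; ring

lemma RegTower.of_isWeaklyRegular (hP : GrowthClass U P) (rs : List U) {V : Type}
    [AddCommGroup V] [Module U V] {a : ℕ} (hrs : RingTheory.Sequence.IsWeaklyRegular V rs)
    (h : P (V ⧸ (Ideal.ofList rs • ⊤ : Submodule U V)) a) : RegTower P rs V a := by
  induction rs generalizing V with
  | nil => exact hP.iso _ _ _ (Submodule.quotEquivOfEqBot _ (by simp)) h
  | cons r rs ih =>
    rw [RingTheory.Sequence.isWeaklyRegular_cons_iff] at hrs
    exact ⟨hrs.1, ih hrs.2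
      (hP.iso _ _ _ (Submodule.quotOfListConsSMulTopEquivQuotSMulTopInner V r rs) h)⟩

lemma RegTower.quot (hP : GrowthClass U P) (rs : List U) {V : Type}
    [AddCommGroup V] [Module U V] {a : ℕ} (h : RegTower P rs V a) :
    P (V ⧸ (Ideal.ofList rs • ⊤ : Submodule U V)) a := by
  induction rs generalizing V with
  | nil => exact hP.iso _ _ _ (Submodule.quotEquivOfEqBot _ (by simp)).symm h
  | cons r rs ih =>
    exact hP.iso _ _ _ (Submodule.quotOfListConsSMulTopEquivQuotSMulTopInner V r rs).symm (ih h.2)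

/-- If `rs` is weakly regular on `V` then `V / rs ^ [n] V` is an iterated extension of
`n ^ |rs|` copies of `V / rs V`. -/
lemma GrowthClass.quot_ofList_pow (hP : GrowthClass U P) (rs : List U) {V : Type}
    [AddCommGroup V] [Module U V] {a : ℕ} (hrs : RingTheory.Sequence.IsWeaklyRegular V rs)
    (h : P (V ⧸ (Ideal.ofList rs • ⊤ : Submodule U V)) a) (n : ℕ) :
    P (V ⧸ (Ideal.ofList (rs.map (· ^ (n + 1))) • ⊤ : Submodule U V))
      ((n + 1) ^ rs.length * a) :=
  ((RegTower.of_isWeaklyRegular hP rs hrs h).pow hP rs n).quot hP _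

end

section lengths

lemma growthClass_length (U : Type) [CommRing U] :
    GrowthClass U (fun V _ _ a => (a : ℕ∞) ≤ Module.length U V) where
  iso V W _ _ _ _ a e h := e.length_eq ▸ h
  ext V₁ V₂ V₃ _ _ _ _ _ _ f g a b hf hfg hg h₁ h₃ := by
    rw [Module.length_eq_add_of_exact f g hf hg hfg]
    push_cast
    exact add_le_add h₁ h₃

/-- Length is subadditive along right exact sequences. -/
lemma Module.length_le_add_of_exact {k V₁ V₂ V₃ : Type*} [Ring k] [AddCommGroup V₁] [Module k V₁]
    [AddCommGroup V₂] [Module k V₂] [AddCommGroup V₃] [Module k V₃]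
    (f : V₁ →ₗ[k] V₂) (g : V₂ →ₗ[k] V₃) (hfg : Function.Exact f g) (hg : Function.Surjective g) :
    Module.length k V₂ ≤ Module.length k V₁ + Module.length k V₃ := by
  rw [Module.length_eq_add_of_exact (LinearMap.range f).subtype g
    (Submodule.subtype_injective _) hg ?_]
  · gcongr
    exact Module.length_le_of_surjective f.rangeRestrict f.surjective_rangeRestrict
  · intro x
    rw [hfg x]; simp

variable (k : Type) {U : Type} [CommRing k] [CommRing U] [Algebra k U]

/-- Lengths are taken over a coefficient ring `k` below `U`, so that the same bound serves for
`U`-lengths (`k = U`) and for dimensions over a field. -/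
lemma length_quotSMulTop_pow_le {V : Type} [AddCommGroup V] [Module U V] [Module k V]
    [IsScalarTower k U V] (r : U) (n : ℕ) :
    Module.length k (QuotSMulTop (r ^ n) V) ≤ n * Module.length k (QuotSMulTop r V) := by
  induction n with
  | zero =>
    have : Subsingleton (QuotSMulTop (r ^ 0) V) := by
      rw [Submodule.Quotient.subsingleton_iff]; simp
    simp
  | succ n ih =>
    have hle : r ^ n • (⊤ : Submodule U V) ≤
        (r ^ (n + 1) • (⊤ : Submodule U V)).comap (LinearMap.lsmul U V r) := by
      rintro x hx
      obtain ⟨y, -, rfl⟩ := (Submodule.mem_smul_pointwise_iff_exists _ _ _).1 hx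
      refine (Submodule.mem_smul_pointwise_iff_exists _ _ _).2 ⟨y, trivial, ?_⟩
      simp only [LinearMap.lsmul_apply, smul_smul]
      ring_nf
    have hle2 : r ^ (n + 1) • (⊤ : Submodule U V) ≤ r • ⊤ := by
      rintro x hx
      obtain ⟨y, -, rfl⟩ := (Submodule.mem_smul_pointwise_iff_exists _ _ _).1 hx
      refine (Submodule.mem_smul_pointwise_iff_exists _ _ _).2 ⟨r ^ n • y, trivial, ?_⟩
      simp only [smul_smul]
      ring_nf
    refine (Module.length_le_add_of_exact
      ((Submodule.mapQ _ _ (LinearMap.lsmul U V r) hle).restrictScalars k)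
      ((Submodule.factor hle2).restrictScalars k) ?_ ?_).trans ?_
    · intro x
      obtain ⟨x, rfl⟩ := Submodule.Quotient.mk_surjective _ x
      constructor
      · intro hx
        rw [LinearMap.restrictScalars_apply, ← Submodule.mkQ_apply, Submodule.factor_mk,
          Submodule.mkQ_apply, Submodule.Quotient.mk_eq_zero] at hx
        obtain ⟨y, -, hy⟩ := (Submodule.mem_smul_pointwise_iff_exists _ _ _).1 hx
        exact ⟨Submodule.Quotient.mk y, by simp [← hy]⟩
      · rintro ⟨y, hy⟩
        obtain ⟨y, rfl⟩ := Submodule.Quotient.mk_surjective _ y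
        rw [← hy]
        rw [LinearMap.restrictScalars_apply, LinearMap.restrictScalars_apply,
          Submodule.mapQ_apply, ← Submodule.mkQ_apply, Submodule.factor_mk, Submodule.mkQ_apply,
          Submodule.Quotient.mk_eq_zero]
        exact (Submodule.mem_smul_pointwise_iff_exists _ _ _).2 ⟨y, trivial, rfl⟩
    · exact Submodule.factor_surjective hle2
    · push_cast
      rw [add_mul, one_mul]
      gcongr

/-- The upper bound for `V / rs ^ [n] V`, which needs no regularity. -/
lemma length_quot_ofList_pow_le (rs : List U) (n : ℕ) {V : Type} [AddCommGroup V] [Module U V]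
    [Module k V] [IsScalarTower k U V] :
    Module.length k (V ⧸ (Ideal.ofList (rs.map (· ^ n)) • ⊤ : Submodule U V)) ≤
      (n ^ rs.length : ℕ) * Module.length k (V ⧸ (Ideal.ofList rs • ⊤ : Submodule U V)) := by
  induction rs generalizing V with
  | nil =>
    rw [List.length_nil, pow_zero, Nat.cast_one, one_mul]
    exact le_rfl
  | cons r rs ih =>
    rw [List.map_cons, ((Submodule.quotOfListConsSMulTopEquivQuotSMulTopOuter V (r ^ n)
      (rs.map (· ^ n))).restrictScalars k).length_eq,
      ((Submodule.quotOfListConsSMulTopEquivQuotSMulTopInner V r rs).restrictScalars k).length_eq]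
    refine (length_quotSMulTop_pow_le k r n).trans ?_
    rw [← ((Submodule.quotOfListConsSMulTopEquivQuotSMulTopOuter V r
      (rs.map (· ^ n))).restrictScalars k).length_eq,
      ((Submodule.quotOfListConsSMulTopEquivQuotSMulTopInner V r
        (rs.map (· ^ n))).restrictScalars k).length_eq, List.length_cons, pow_succ', Nat.cast_mul,
        mul_assoc]
    gcongr
    exact ih

end lengths

end

/-! ### Regular systems of parameters -/

section regular
open IsLocalRing

lemma exists_prime_le_ringKrullDim_quotient {R : Type} [CommRing R] (n : ℕ)
    (h : (n : WithBot ℕ∞) ≤ ringKrullDim R) :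
    ∃ P : Ideal R, P.IsPrime ∧ (n : WithBot ℕ∞) ≤ ringKrullDim (R ⧸ P) := by
  obtain ⟨l, hl⟩ := Order.le_krullDim_iff.1 h
  refine ⟨l.head.asIdeal, l.head.isPrime, ?_⟩
  rw [ringKrullDim_quotient]
  refine Order.le_krullDim_iff.2 ⟨⟨l.length, fun i => ⟨l i, ?_⟩, ?_⟩, hl⟩
  · rw [PrimeSpectrum.mem_zeroLocus]
    exact LTSeries.head_le l i
  · intro i
    exact l.step i

lemma ringKrullDim_le_length_of_ofList {R : Type} [CommRing R] [IsLocalRing R] [IsNoetherianRing R]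
    (rs : List R) (h : Ideal.ofList rs = maximalIdeal R) :
    ringKrullDim R ≤ rs.length := by
  classical
  refine (ringKrullDim_le_spanFinrank_maximalIdeal R).trans ?_
  have h1 : Ideal.ofList rs = Submodule.span R (rs.toFinset : Set R) := by
    simp [Ideal.ofList, Ideal.span]
  rw [← h, h1]
  have h2 := Submodule.spanFinrank_span_le_ncard_of_finite (R := R) (rs.toFinset.finite_toSet)
  rw [Set.ncard_coe_finset] at h2
  exact_mod_cast h2.trans (List.toFinset_card_le rs)

lemma withBot_le_of_add_one_le (n : ℕ) (a : WithBot ℕ∞) (h : ((n + 1 : ℕ) : WithBot ℕ∞) ≤ a + 1) :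
    (n : WithBot ℕ∞) ≤ a := by
  induction a with
  | bot => simp at h
  | coe a =>
    induction a with
    | top => simp
    | coe a =>
      norm_cast at h ⊢
      exact Nat.le_of_succ_le_succ (by exact_mod_cast h)

lemma ringKrullDim_le_quotient_span_singleton_add_one {R : Type} [CommRing R] [IsLocalRing R]
    [IsNoetherianRing R] {x : R} (hx : x ∈ maximalIdeal R) :
    ringKrullDim R ≤ ringKrullDim (R ⧸ Ideal.span {x}) + 1 := by
  have := ringKrullDim_le_ringKrullDim_quotient_add_encard (R := R) {x} (by
    rw [IsLocalRing.ringJacobson_eq_maximalIdeal]; simpa using hx)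
  rwa [Set.encard_singleton] at this

/-- A regular local ring is a domain, and a system of `dim R` generators of its maximal ideal is a
regular sequence. By induction on the dimension: `R / x` is a domain, so the ideal `(x)` is prime;
a prime `P` of maximal coheight is contained in `(x)` for dimension reasons, and then `P = xP`
forces `P = 0` by Nakayama. -/
theorem isDomain_and_isWeaklyRegular_of_generators {R : Type} [CommRing R] [IsLocalRing R]
    [IsNoetherianRing R] (rs : List R) (h : Ideal.ofList rs = maximalIdeal R)
    (hd : (rs.length : WithBot ℕ∞) ≤ ringKrullDim R) :
    IsDomain R ∧ RingTheory.Sequence.IsWeaklyRegular R rs := by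
  obtain ⟨n, hn⟩ : ∃ n, rs.length = n := ⟨_, rfl⟩
  induction n generalizing R with
  | zero =>
    obtain rfl := List.eq_nil_of_length_eq_zero hn
    rw [Ideal.ofList_nil] at h
    have hf : IsField R := IsLocalRing.isField_iff_maximalIdeal_eq.2 h.symm
    exact ⟨hf.isDomain, .nil _ _⟩
  | succ n ih =>
    obtain ⟨x, rs, rfl⟩ := List.exists_cons_of_length_eq_add_one hn
    rw [List.length_cons, add_left_inj] at hn
    have hx : x ∈ maximalIdeal R := by
      rw [← h, Ideal.ofList_cons]
      exact Ideal.mem_sup_left (Ideal.mem_span_singleton_self x)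
    have hne : Ideal.span {x} ≠ ⊤ := fun h' => by
      rw [Ideal.span_singleton_eq_top] at h'
      exact (mem_maximalIdeal x).1 hx h'
    have : Nontrivial (R ⧸ Ideal.span {x}) := Ideal.Quotient.nontrivial_iff.2 hne
    have : IsLocalRing (R ⧸ Ideal.span {x}) :=
      .of_surjective' (Ideal.Quotient.mk _) Ideal.Quotient.mk_surjective
    let q : R →+* R ⧸ Ideal.span {x} := Ideal.Quotient.mk _
    have hq : Function.Surjective q := Ideal.Quotient.mk_surjective
    have hmap : Ideal.ofList (rs.map q) = maximalIdeal (R ⧸ Ideal.span {x}) := by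
      rw [← Ideal.map_ofList, ← IsLocalRing.map_maximalIdeal_of_surjective q hq, ← h,
        Ideal.ofList_cons, Ideal.map_sup, Ideal.map_span q {x}, Set.image_singleton]
      have : q x = 0 := Ideal.Quotient.eq_zero_iff_mem.2 (Ideal.mem_span_singleton_self x)
      simp [this]
    have hdim : (n : WithBot ℕ∞) ≤ ringKrullDim (R ⧸ Ideal.span {x}) := by
      apply withBot_le_of_add_one_le
      refine le_trans ?_ (ringKrullDim_le_quotient_span_singleton_add_one hx)
      simpa [hn] using hd
    obtain ⟨hdom, hreg⟩ := ih (rs.map q) hmap (by simpa [hn] using hdim) (by simpa using hn)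
    have hle : ringKrullDim (R ⧸ Ideal.span {x}) ≤ n := by
      simpa [hn] using ringKrullDim_le_length_of_ofList _ hmap
    obtain ⟨P, hP, hPd⟩ := exists_prime_le_ringKrullDim_quotient (n + 1)
      (by simpa [hn] using hd)
    have hnot : ¬ ((n + 1 : ℕ) : WithBot ℕ∞) ≤ n := by
      norm_cast; omega
    have hxP : x ∉ P := by
      intro hxP
      apply hnot
      refine hPd.trans (le_trans ?_ hle)
      exact ringKrullDim_le_of_surjective
        (Ideal.Quotient.factor ((Ideal.span_singleton_le_iff_mem P).2 hxP))
        (Ideal.Quotient.factor_surjective _)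
    have hPx : P ≤ Ideal.span {x} := by
      by_contra hcon
      obtain ⟨p, hp, hpx⟩ := SetLike.not_le_iff_exists.1 hcon
      have : Nontrivial (R ⧸ P) := Ideal.Quotient.nontrivial_iff.2 hP.ne_top
      have : IsLocalRing (R ⧸ P) :=
        .of_surjective' (Ideal.Quotient.mk _) Ideal.Quotient.mk_surjective
      let y : R ⧸ P := Ideal.Quotient.mk P x
      have hy : y ∈ maximalIdeal (R ⧸ P) := by
        rw [← IsLocalRing.map_maximalIdeal_of_surjective (Ideal.Quotient.mk P)
          Ideal.Quotient.mk_surjective]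
        exact Ideal.mem_map_of_mem _ hx
      have h1 := ringKrullDim_le_quotient_span_singleton_add_one hy
      let f : (R ⧸ Ideal.span {x}) →+* ((R ⧸ P) ⧸ Ideal.span {y}) :=
        Ideal.Quotient.lift _ ((Ideal.Quotient.mk _).comp (Ideal.Quotient.mk P)) (by
          intro a ha
          obtain ⟨b, rfl⟩ := Ideal.mem_span_singleton.1 ha
          rw [RingHom.comp_apply, Ideal.Quotient.eq_zero_iff_mem, map_mul]
          exact Ideal.mul_mem_right _ _ (Ideal.mem_span_singleton_self y))
      have hf : Function.Surjective f := Ideal.Quotient.lift_surjective_of_surjective _ _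
        (Ideal.Quotient.mk_surjective.comp Ideal.Quotient.mk_surjective)
      have hqp : q p ∈ nonZeroDivisors (R ⧸ Ideal.span {x}) := by
        apply mem_nonZeroDivisors_of_ne_zero
        rwa [Ne, Ideal.Quotient.eq_zero_iff_mem]
      have hfp : f (q p) = 0 := by
        change (Ideal.Quotient.mk _) (Ideal.Quotient.mk P p) = 0
        rw [Ideal.Quotient.eq_zero_iff_mem.2 hp, map_zero]
      have h2 := ringKrullDim_succ_le_of_surjective f hf hqp hfp
      exact hnot (hPd.trans (h1.trans (h2.trans hle)))
    have hP0 : P = ⊥ := by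
      apply Submodule.eq_bot_of_le_smul_of_le_jacobson_bot (maximalIdeal R) P
        (IsNoetherian.noetherian P)
      · intro p hp
        obtain ⟨r, rfl⟩ := Ideal.mem_span_singleton.1 (hPx hp)
        exact Submodule.smul_mem_smul hx ((hP.mem_or_mem hp).resolve_left hxP)
      · exact IsLocalRing.maximalIdeal_le_jacobson _
    subst hP0
    have hdR : IsDomain R := IsDomain.of_bot_isPrime R
    have hx0 : x ≠ 0 := by simpa using hxP
    refine ⟨hdR, ?_⟩
    rw [RingTheory.Sequence.isWeaklyRegular_cons_iff]
    refine ⟨fun a b hab => mul_left_cancel₀ hx0 hab, ?_⟩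
    have h1 : RingTheory.Sequence.IsWeaklyRegular (R ⧸ Ideal.span {x}) rs :=
      (RingTheory.Sequence.isWeaklyRegular_map_algebraMap_iff (R ⧸ Ideal.span {x})
        (R ⧸ Ideal.span {x}) rs).1 hreg
    refine (LinearEquiv.isWeaklyRegular_congr (Submodule.quotEquivOfEq _ _ ?_) rs).1 h1
    rw [← Submodule.ideal_span_singleton_smul]
    simp

end regular

/-! ### Formal smoothness over perfect fields -/

/-- Vanishing of the first cotangent homology, made explicit in the presentation `K[L] → L`: a
polynomial relation all of whose partial derivatives vanish lies in the square of the ideal of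
relations. In this form the criterion visibly involves only finitely many elements of `L`. -/
lemma h1_subsingleton_iff_aux (K L : Type) [Field K] [Field L] [Algebra K L] :
    Subsingleton (Algebra.H1Cotangent K L) ↔
      ∀ f : MvPolynomial L K, MvPolynomial.aeval (id : L → L) f = 0 →
        (∀ i, MvPolynomial.aeval (id : L → L) (MvPolynomial.pderiv i f) = 0) →
        f ∈ (RingHom.ker (MvPolynomial.aeval (R := K) (id : L → L))) ^ 2 := by
  let P := Algebra.Generators.self K L
  have key : ∀ f : P.toExtension.ker, P.toExtension.cotangentComplex (Algebra.Extension.Cotangent.mk f) = 0 ↔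
      ∀ i, MvPolynomial.aeval (id : L → L) (MvPolynomial.pderiv i f.1) = 0 := by
    intro f
    rw [Algebra.Extension.cotangentComplex_mk, ← P.cotangentSpaceBasis.repr.map_eq_zero_iff,
      Finsupp.ext_iff]
    refine forall_congr' fun i => ?_
    have := P.cotangentSpaceBasis_repr_one_tmul f.1 i
    rw [Finsupp.zero_apply]
    exact Eq.congr_left this
  have hker : ∀ f : MvPolynomial L K, f ∈ P.toExtension.ker ↔ MvPolynomial.aeval (id : L → L) f = 0 := by
    intro f; exact Iff.rfl
  change Subsingleton P.toExtension.H1Cotangent ↔ _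
  rw [Algebra.Extension.subsingleton_h1Cotangent, injective_iff_map_eq_zero]
  constructor
  · intro h f hf hd
    have := h (Algebra.Extension.Cotangent.mk ⟨f, (hker f).2 hf⟩) ((key _).2 hd)
    rw [Algebra.Extension.Cotangent.mk_eq_zero_iff] at this
    exact this
  · intro h x hx
    obtain ⟨f, rfl⟩ := Algebra.Extension.Cotangent.mk_surjective x
    rw [Algebra.Extension.Cotangent.mk_eq_zero_iff]
    exact h f.1 ((hker _).1 f.2) ((key f).1 hx)

/-- Every extension of a perfect field is formally smooth. -/
lemma formallySmooth_of_perfectField (K L : Type) [Field K] [Field L] [Algebra K L]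
    [PerfectField K] : Algebra.FormallySmooth K L := by
  refine ⟨inferInstance, (h1_subsingleton_iff_aux K L).2 fun f hf hd => ?_⟩
  let L' := IntermediateField.adjoin K (f.vars : Set L)
  have hfg : L'.FG := ⟨f.vars, rfl⟩
  have : Algebra.EssFiniteType K L' := IntermediateField.essFiniteType_iff.mpr hfg
  have hs : Algebra.FormallySmooth K L' := Algebra.FormallySmooth.of_perfectField
  have h1 := (h1_subsingleton_iff_aux K L').1 hs.subsingleton_h1Cotangent
  have hinj : Function.Injective (algebraMap L' L) := (algebraMap L' L).injective
  obtain ⟨f', hf'⟩ : ∃ f' : MvPolynomial L' K, MvPolynomial.rename (algebraMap L' L) f' = f := by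
    refine MvPolynomial.exists_rename_eq_of_vars_subset_range f _ hinj ?_
    intro i hi
    exact ⟨⟨i, IntermediateField.subset_adjoin _ _ hi⟩, rfl⟩
  have hev : ∀ g : MvPolynomial L' K, MvPolynomial.aeval (id : L → L) (MvPolynomial.rename (algebraMap L' L) g)
      = algebraMap L' L (MvPolynomial.aeval (id : L' → L') g) := by
    intro g
    rw [MvPolynomial.aeval_rename, ← MvPolynomial.aeval_algebraMap_apply]
    rfl
  have h2 := h1 f' (hinj (by rw [← hev, hf', hf, map_zero])) fun i => hinj (by
    rw [← hev, ← MvPolynomial.pderiv_rename hinj, hf', hd, map_zero])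
  have h3 := Ideal.mem_map_of_mem (MvPolynomial.rename (R := K) (algebraMap L' L)).toRingHom h2
  rw [Ideal.map_pow] at h3
  rw [← hf']
  refine Ideal.pow_right_mono ?_ 2 h3
  rw [Ideal.map_le_iff_le_comap]
  intro g hg
  change MvPolynomial.aeval (id : L → L) (MvPolynomial.rename (algebraMap L' L) g) = 0
  rw [hev, show MvPolynomial.aeval (id : L' → L') g = 0 from hg, map_zero]

/-! ### Coefficient fields -/

section
open IsLocalRing

lemma exists_perfectField_hom (K : Type) [Field K] :
    ∃ (F : Type) (_ : Field F) (_ : PerfectField F), Nonempty (F →+* K) := by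
  obtain ⟨p, hp⟩ := CharP.exists K
  rcases CharP.char_is_prime_or_zero K p with h | h
  · have : Fact p.Prime := ⟨h⟩
    exact ⟨ZMod p, inferInstance, inferInstance, ⟨ZMod.castHom dvd_rfl K⟩⟩
  · subst h
    have : CharZero K := CharP.charP_to_charZero K
    exact ⟨ℚ, inferInstance, inferInstance, ⟨algebraMap ℚ K⟩⟩

/-- A compatible system of ring sections of `R ⧸ m ^ s → k`, for a local ring containing a
field: a coefficient field of the completion of `R`, read modulo the powers of `m`. -/
lemma exists_coefficientField (R : Type) [CommRing R] [IsLocalRing R]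
    (hfield : ∃ (K : Type) (_ : Field K), Nonempty (K →+* R)) :
    ∃ σ : ∀ s : ℕ, ResidueField R →+* R ⧸ (maximalIdeal R) ^ s,
      (∀ s t (h : s ≤ t), (Ideal.Quotient.factorPow (maximalIdeal R) h).comp (σ t) = σ s) ∧
      ∀ s, s ≠ 0 → ∀ x r, σ s x = Ideal.Quotient.mk _ r → residue R r = x := by
  obtain ⟨K, _, ⟨φ⟩⟩ := hfield
  obtain ⟨F, _, _, ⟨ψ⟩⟩ := exists_perfectField_hom K
  let _ : Algebra F R := (φ.comp ψ).toAlgebra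
  -- lift the identity of the residue field to the completion by formal smoothness
  have := formallySmooth_of_perfectField F (ResidueField R)
  let f : ResidueField R →ₐ[F] R ⧸ maximalIdeal R := AlgHom.id F (ResidueField R)
  obtain ⟨g, hg⟩ := Algebra.FormallySmooth.exists_adicCompletionEvalOneₐ_comp_eq f
  let ev : ∀ s, AdicCompletion (maximalIdeal R) R →+* R ⧸ maximalIdeal R ^ s :=
    fun s => (AdicCompletion.evalₐ (maximalIdeal R) s).toRingHom
  have hev : ∀ s t (h : s ≤ t) x, Ideal.Quotient.factorPow (maximalIdeal R) h (ev t x) = ev s x := by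
    intro s t h x
    obtain ⟨x, rfl⟩ := AdicCompletion.mk_surjective _ _ x
    change Ideal.Quotient.factorPow (maximalIdeal R) h (AdicCompletion.evalₐ _ t _) =
      AdicCompletion.evalₐ _ s _
    rw [AdicCompletion.evalₐ_mk, AdicCompletion.evalₐ_mk]
    exact AdicCompletion.Ideal.mk_eq_mk _ h x
  refine ⟨fun s => (ev s).comp g.toRingHom, fun s t h => RingHom.ext fun x => hev s t h _, ?_⟩
  intro s hs x r hx
  have h1 : AdicCompletion.evalOneₐ (maximalIdeal R) (g x) = (show R ⧸ maximalIdeal R from x) :=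
    congr($hg x)
  rw [← AdicCompletion.factorₐ_evalₐ_one] at h1
  have h2 := hev 1 s (Nat.one_le_iff_ne_zero.2 hs) (g x)
  have h3 : ev s (g x) = Ideal.Quotient.mk _ r := hx
  rw [h3] at h2
  have h4 : AdicCompletion.evalₐ (maximalIdeal R) 1 (g x) = Ideal.Quotient.mk _ r := h2.symm
  rw [h4] at h1
  exact h1

end

/-! ### Regular local rings modulo powers of the maximal ideal are truncated polynomial rings -/

section
open IsLocalRing

section
variable {R : Type} [CommRing R] [IsLocalRing R] {d : ℕ}

/-- A coefficient system: compatible ring sections of `R ⧸ m ^ s → k` for all `s ≥ 1`. -/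
structure IsCoefficientSystem (σ : ∀ s : ℕ, ResidueField R →+* R ⧸ (maximalIdeal R) ^ s) :
    Prop where
  compat : ∀ s t (h : s ≤ t), (Ideal.Quotient.factorPow (maximalIdeal R) h).comp (σ t) = σ s
  residue_eq : ∀ s, s ≠ 0 → ∀ (x : ResidueField R) (r : R), σ s x = Ideal.Quotient.mk _ r → residue R r = x

variable {σ : ∀ s : ℕ, ResidueField R →+* R ⧸ (maximalIdeal R) ^ s}

/-- The map `k[X] → R ⧸ m ^ s` sending `X i` to `x i`. -/
noncomputable def pMap (σ : ∀ s : ℕ, ResidueField R →+* R ⧸ (maximalIdeal R) ^ s)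
    (x : Fin d → R) (s : ℕ) : MvPolynomial (Fin d) (ResidueField R) →+* R ⧸ (maximalIdeal R) ^ s :=
  MvPolynomial.eval₂Hom (σ s) fun i => Ideal.Quotient.mk _ (x i)

lemma pMap_factor (hσ : IsCoefficientSystem σ) (x : Fin d → R) {s t : ℕ} (h : s ≤ t) (a) :
    Ideal.Quotient.factorPow (maximalIdeal R) h (pMap σ x t a) = pMap σ x s a := by
  have : (Ideal.Quotient.factorPow (maximalIdeal R) h).comp (pMap σ x t) = pMap σ x s := by
    refine MvPolynomial.ringHom_ext (fun c => ?_) fun i => ?_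
    · simpa [pMap] using congr($(hσ.compat s t h) c)
    · simp [pMap]
  exact congr($this a)

/-- Elements of `m ^ j` agree, up to `m ^ (j + 1)`, with values of polynomials in `(X) ^ j`. -/
lemma exists_pMap_sub_mem (hσ : IsCoefficientSystem σ) (x : Fin d → R)
    (hx : Ideal.span (Set.range x) = maximalIdeal R) {s : ℕ} (hs : s ≠ 0) (j : ℕ) :
    ∀ r ∈ maximalIdeal R ^ j, ∃ a ∈ MvPolynomial.idealOfVars (Fin d) (ResidueField R) ^ j,
      ∃ r' ∈ maximalIdeal R ^ (j + 1), Ideal.Quotient.mk _ r = pMap σ x s a +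
        Ideal.Quotient.mk _ r' := by
  induction j with
  | zero =>
    intro r _
    obtain ⟨r₁, hr₁⟩ := Ideal.Quotient.mk_surjective (σ s (residue R r))
    refine ⟨MvPolynomial.C (residue R r), by simp, r - r₁, ?_, ?_⟩
    · rw [zero_add, pow_one, ← residue_eq_zero_iff, map_sub, sub_eq_zero]
      exact (hσ.residue_eq s hs _ _ hr₁.symm).symm
    · simp [pMap, hr₁]
  | succ j ih =>
    intro r hr
    rw [pow_succ'] at hr
    refine Submodule.mul_induction_on hr ?_ ?_
    · intro u hu
      rw [← hx] at hu
      induction hu using Submodule.span_induction with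
      | zero => exact fun t _ => ⟨0, zero_mem _, 0, zero_mem _, by simp⟩
      | mem u hu =>
        obtain ⟨i, rfl⟩ := hu
        intro t ht
        obtain ⟨a, ha, r', hr', h⟩ := ih t ht
        refine ⟨MvPolynomial.X i * a, ?_, x i * r', ?_, ?_⟩
        · rw [pow_succ']
          exact Ideal.mul_mem_mul (Ideal.subset_span ⟨i, rfl⟩) ha
        · rw [pow_succ' _ (j + 1)]
          exact Ideal.mul_mem_mul (hx ▸ Ideal.subset_span ⟨i, rfl⟩) hr'
        · simp [h, pMap, mul_add]
      | add u v _ _ hu hv =>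
        intro t ht
        obtain ⟨a, ha, r₁, hr₁, h₁⟩ := hu t ht
        obtain ⟨b, hb, r₂, hr₂, h₂⟩ := hv t ht
        refine ⟨a + b, add_mem ha hb, r₁ + r₂, add_mem hr₁ hr₂, ?_⟩
        rw [add_mul, map_add, h₁, h₂, map_add, map_add]; ring
      | smul c u _ hu =>
        intro t ht
        obtain ⟨a, ha, r₁, hr₁, h₁⟩ := hu (c * t) (Ideal.mul_mem_left _ _ ht)
        refine ⟨a, ha, r₁, hr₁, ?_⟩
        rw [← h₁, smul_eq_mul]; congr 1; ring
    · rintro u v ⟨a, ha, r₁, hr₁, h₁⟩ ⟨b, hb, r₂, hr₂, h₂⟩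
      refine ⟨a + b, add_mem ha hb, r₁ + r₂, add_mem hr₁ hr₂, ?_⟩
      rw [map_add, h₁, h₂, map_add, map_add]; ring

/-- Iterated approximation, which stops because `m ^ s` is zero in `R ⧸ m ^ s`. -/
lemma exists_pMap_eq (hσ : IsCoefficientSystem σ) (x : Fin d → R)
    (hx : Ideal.span (Set.range x) = maximalIdeal R) (s j : ℕ) :
    ∀ r ∈ maximalIdeal R ^ j, ∃ a ∈ MvPolynomial.idealOfVars (Fin d) (ResidueField R) ^ j,
      pMap σ x s a = Ideal.Quotient.mk _ r := by
  obtain ⟨n, hn⟩ : ∃ n, s ≤ j + n := ⟨s, by omega⟩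
  induction n generalizing j with
  | zero =>
    intro r hr
    refine ⟨0, zero_mem _, ?_⟩
    rw [map_zero, eq_comm, Ideal.Quotient.eq_zero_iff_mem]
    exact Ideal.pow_le_pow_right (by omega) hr
  | succ n ih =>
    intro r hr
    rcases eq_or_ne s 0 with rfl | hs
    · refine ⟨0, zero_mem _, ?_⟩
      rw [map_zero, eq_comm, Ideal.Quotient.eq_zero_iff_mem]
      simp
    obtain ⟨a, ha, r', hr', h⟩ := exists_pMap_sub_mem hσ x hx hs j r hr
    obtain ⟨b, hb, h'⟩ := ih (j + 1) (by omega) r' hr'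
    exact ⟨a + b, add_mem ha (Ideal.pow_le_pow_right (by omega) hb), by rw [map_add, h', h]⟩

lemma pMap_surjective (hσ : IsCoefficientSystem σ) (x : Fin d → R)
    (hx : Ideal.span (Set.range x) = maximalIdeal R) (s : ℕ) :
    Function.Surjective (pMap σ x s) := by
  intro q
  obtain ⟨r, rfl⟩ := Ideal.Quotient.mk_surjective q
  obtain ⟨a, -, h⟩ := exists_pMap_eq hσ x hx s 0 r (by simp)
  exact ⟨a, h⟩

lemma ofList_ofFn {S : Type*} [CommRing S] (x : Fin d → S) :
    Ideal.ofList (List.ofFn x) = Ideal.span (Set.range x) := by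
  unfold Ideal.ofList; congr 1; ext; simp [List.mem_ofFn]

lemma isMaximal_idealOfVars (k : Type) [Field k] (ι : Type) :
    (MvPolynomial.idealOfVars ι k).IsMaximal := by
  have : MvPolynomial.idealOfVars ι k = RingHom.ker (MvPolynomial.constantCoeff (R := k) (σ := ι)) := by
    ext f
    have := MvPolynomial.mem_pow_idealOfVars_iff' (σ := ι) (R := k) 1 f
    rw [pow_one] at this
    rw [this, RingHom.mem_ker, MvPolynomial.constantCoeff_eq]
    simp only [Nat.lt_one_iff, Finsupp.degree_eq_zero_iff, forall_eq]
  rw [this]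
  exact RingHom.ker_isMaximal_of_surjective _ fun c => ⟨MvPolynomial.C c, by simp⟩

/-- The kernel of `k[X] → R ⧸ m ^ s` is `(X) ^ s`; only this inclusion is needed. Because `x` is a
regular sequence, `R / (x₁ˢ, …, x_dˢ)` has length `s ^ d`, as large as that of
`k[X] / (X₁ˢ, …, X_dˢ)`, which leaves no room for further relations. -/
lemma ker_pMap_le [IsNoetherianRing R] (hσ : IsCoefficientSystem σ) (x : Fin d → R)
    (hx : Ideal.span (Set.range x) = maximalIdeal R)
    (hreg : RingTheory.Sequence.IsWeaklyRegular R (List.ofFn x)) (s : ℕ) :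
    RingHom.ker (pMap σ x s) ≤ MvPolynomial.idealOfVars (Fin d) (ResidueField R) ^ s := by
  let A := MvPolynomial (Fin d) (ResidueField R)
  rcases s with _ | s
  · simp
  let I : Ideal R := Ideal.ofList ((List.ofFn x).map (· ^ (s + 1)))
  let J : Ideal A := Ideal.ofList ((List.ofFn (MvPolynomial.X : Fin d → A)).map (· ^ (s + 1)))
  -- `I` contains a power of `m`, so `R ⧸ I` receives a map from `k[X]` even if `R` does not
  obtain ⟨t, ht⟩ : ∃ t, maximalIdeal R ^ t ≤ I := by
    refine Ideal.exists_pow_le_of_le_radical_of_fg ?_ (IsNoetherian.noetherian _)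
    rw [← hx, Ideal.span_le]
    rintro _ ⟨i, rfl⟩
    refine ⟨s + 1, Ideal.subset_span ?_⟩
    simp
  have hJs : J ≤ MvPolynomial.idealOfVars (Fin d) (ResidueField R) ^ (s + 1) := by
    refine Ideal.span_le.2 ?_
    intro f hf
    obtain ⟨i, rfl⟩ : ∃ i, MvPolynomial.X i ^ (s + 1) = f := by simpa using hf
    exact Ideal.pow_mem_pow (Ideal.subset_span (Set.mem_range_self i)) _
  let t' := max t (s + 1)
  have ht' : maximalIdeal R ^ t' ≤ I := (Ideal.pow_le_pow_right (le_max_left _ _)).trans ht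
  let g : A →+* R ⧸ I := (Ideal.Quotient.factor ht').comp (pMap σ x t')
  have hgsurj : Function.Surjective g :=
    (Ideal.Quotient.factor_surjective ht').comp (pMap_surjective hσ x hx t')
  -- `k[X] / J → R / I` is a surjection between modules of the same length
  have hker : RingHom.ker g ≤ J := by
    let _ : Algebra A (R ⧸ I) := g.toAlgebra
    have hJg : J ≤ RingHom.ker g := by
      refine Ideal.span_le.2 ?_
      intro f hf
      obtain ⟨i, rfl⟩ : ∃ i, MvPolynomial.X i ^ (s + 1) = f := by simpa using hf
      have : g (MvPolynomial.X i) = Ideal.Quotient.mk I (x i) := by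
        have h0 : pMap σ x t' (MvPolynomial.X i) = Ideal.Quotient.mk _ (x i) := by simp [pMap]
        change Ideal.Quotient.factor ht' _ = _
        rw [h0]; rfl
      rw [SetLike.mem_coe, RingHom.mem_ker, map_pow, this, ← map_pow,
        Ideal.Quotient.eq_zero_iff_mem]
      exact Ideal.subset_span (by simp)
    let G : (A ⧸ J) →ₗ[A] R ⧸ I := Submodule.liftQ J (Algebra.linearMap A (R ⧸ I)) hJg
    have hG : Function.Surjective G := by
      intro q
      obtain ⟨a, ha⟩ := hgsurj q
      exact ⟨Submodule.Quotient.mk a, ha⟩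
    have h1 : Module.length A (A ⧸ J) ≤ ((s + 1) ^ d : ℕ) := by
      have := length_quot_ofList_pow_le A (List.ofFn (MvPolynomial.X : Fin d → A)) (s + 1) (V := A)
      rw [ofList_ofFn, smul_eq_mul, smul_eq_mul, Ideal.mul_top, Ideal.mul_top,
        List.length_ofFn] at this
      have hs : IsSimpleModule A (A ⧸ MvPolynomial.idealOfVars (Fin d) (ResidueField R)) :=
        isSimpleModule_iff_isCoatom.2 (isMaximal_idealOfVars _ _).out
      rwa [Module.length_eq_one A (A ⧸ MvPolynomial.idealOfVars (Fin d) (ResidueField R)),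
        mul_one] at this
    have h2 : ((s + 1) ^ d : ℕ) ≤ Module.length A (R ⧸ I) := by
      have := (growthClass_length R).quot_ofList_pow (List.ofFn x) hreg (a := 1) ?_ s
      · rw [smul_eq_mul, Ideal.mul_top, mul_one, List.length_ofFn] at this
        rw [Module.length_eq_of_surjective (R := R ⧸ I) (S := A) hgsurj]
        rwa [Module.length_eq_of_surjective (R := R ⧸ I) (S := R) Ideal.Quotient.mk_surjective]
          at this
      · rw [Nat.cast_one, Order.one_le_iff_ne_zero, ← pos_iff_ne_zero, Module.length_pos_iff,
          Submodule.Quotient.nontrivial_iff, smul_eq_mul, Ideal.mul_top, ofList_ofFn, hx]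
        exact (maximalIdeal.isMaximal R).ne_top
    have h3 := Module.length_eq_add_of_exact (LinearMap.ker G).subtype G
      (Submodule.subtype_injective _) hG (LinearMap.exact_subtype_ker_map G)
    have h4 : Module.length A (LinearMap.ker G) = 0 := by
      have h5 : Module.length A (LinearMap.ker G) + Module.length A (R ⧸ I) ≤
          0 + Module.length A (R ⧸ I) := by
        rw [← h3, zero_add]; exact h1.trans h2
      refine nonpos_iff_eq_zero.1 ((ENat.add_le_add_iff_right ?_).1 h5)
      refine ne_top_of_le_ne_top (ENat.natCast_ne_top ((s + 1) ^ d)) ?_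
      refine le_trans ?_ h1
      rw [h3]; exact le_add_self
    intro f hf
    have : Subsingleton (LinearMap.ker G) := Module.length_eq_zero_iff.1 h4
    have h5 : (⟨Submodule.Quotient.mk f, hf⟩ : LinearMap.ker G) = 0 := Subsingleton.elim _ _
    exact (Submodule.Quotient.mk_eq_zero J).1 congr($h5.1)
  -- subtract from `f` a polynomial in `(X) ^ (s + 1)` with the same image to land in `ker g ≤ J`
  intro f hf
  obtain ⟨r, hr⟩ := Ideal.Quotient.mk_surjective (pMap σ x t' f)
  have hrs : r ∈ maximalIdeal R ^ (s + 1) := by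
    rw [← Ideal.Quotient.eq_zero_iff_mem]
    have := pMap_factor hσ x (le_max_right t (s + 1)) f
    rw [hf] at this
    rw [← this, ← hr]; rfl
  obtain ⟨h, hh, hhr⟩ := exists_pMap_eq hσ x hx t' (s + 1) r hrs
  have : f - h ∈ RingHom.ker g := by
    rw [RingHom.mem_ker, map_sub, sub_eq_zero]
    change Ideal.Quotient.factor ht' _ = Ideal.Quotient.factor ht' _
    rw [hhr, hr]
  have := add_mem (hJs (hker this)) hh
  rwa [sub_add_cancel] at this
end

end

/-! ### The translation homomorphism -/

section
open IsLocalRing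

/-- Ideals extended to the completion of a Noetherian ring are closed: membership can be tested
modulo each `I ^ s`. -/
lemma mem_map_of_forall_evalₐ {D : Type} [CommRing D] [IsNoetherianRing D] (I E : Ideal D)
    (z : AdicCompletion I D)
    (hz : ∀ s, AdicCompletion.evalₐ I s z ∈ E.map (Ideal.Quotient.mk (I ^ s))) :
    z ∈ E.map (algebraMap D (AdicCompletion I D)) := by
  have hex := AdicCompletion.map_exact (I := I) (f := E.subtype) (g := E.mkQ)
    (Submodule.subtype_injective E) (LinearMap.exact_subtype_mkQ E) E.mkQ_surjective
  obtain ⟨z, rfl⟩ := AdicCompletion.mk_surjective _ _ z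
  have h0 : AdicCompletion.map I E.mkQ (AdicCompletion.mk I D z) = 0 := by
    refine AdicCompletion.ext fun n => ?_
    have h := hz n
    rw [AdicCompletion.evalₐ_mk] at h
    obtain ⟨e, he, hez⟩ := (Ideal.mem_map_iff_of_surjective _ Ideal.Quotient.mk_surjective).1 h
    rw [AdicCompletion.map_val_apply]
    change Submodule.Quotient.mk (Submodule.Quotient.mk (z n) : D ⧸ E) = 0
    rw [Submodule.Quotient.mk_eq_zero]
    have h1 : z n - e ∈ I ^ n := (Ideal.Quotient.eq).1 hez.symm
    have h2 : (Submodule.Quotient.mk (z n) : D ⧸ E) = (z n - e) • Submodule.Quotient.mk 1 := by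
      rw [← Submodule.Quotient.mk_smul, Submodule.Quotient.eq]
      simpa using he
    rw [h2]
    exact Submodule.smul_mem_smul h1 trivial
  obtain ⟨w, hw⟩ := (hex _).1 h0
  obtain ⟨t, rfl⟩ := AdicCompletion.ofTensorProduct_surjective_of_finite I E w
  rw [← hw]
  clear hw
  induction t using TensorProduct.induction_on with
  | zero => rw [map_zero, map_zero]; exact zero_mem _
  | add a b ha hb => rw [map_add, map_add]; exact add_mem ha hb
  | tmul a e =>
    rw [AdicCompletion.ofTensorProduct_tmul, map_smul, AdicCompletion.map_of]
    exact Ideal.mul_mem_left _ a (Ideal.mem_map_of_mem _ e.2)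

section
variable {R : Type} [CommRing R] [IsLocalRing R] {d : ℕ}

/-- The maximal ideal `(m, ε_1, …, ε_d)` of the polynomial ring `R[ε_1, …, ε_d]`. -/
noncomputable def bigIdeal (R : Type) [CommRing R] [IsLocalRing R] (d : ℕ) :
    Ideal (MvPolynomial (Fin d) R) :=
  (maximalIdeal R).map MvPolynomial.C ⊔ MvPolynomial.idealOfVars (Fin d) R

lemma C_mem_bigIdeal {r : R} (h : r ∈ maximalIdeal R) : MvPolynomial.C r ∈ bigIdeal R d :=
  le_sup_left (a := (maximalIdeal R).map MvPolynomial.C) (Ideal.mem_map_of_mem _ h)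

lemma X_mem_bigIdeal (i : Fin d) : (MvPolynomial.X i : MvPolynomial (Fin d) R) ∈ bigIdeal R d :=
  le_sup_right (a := (maximalIdeal R).map MvPolynomial.C)
    (Ideal.subset_span (Set.mem_range_self i))

lemma sub_C_constantCoeff_mem {R : Type} [CommRing R] {d : ℕ} (f : MvPolynomial (Fin d) R) :
    f - MvPolynomial.C (MvPolynomial.constantCoeff f) ∈ MvPolynomial.idealOfVars (Fin d) R := by
  induction f using MvPolynomial.induction_on with
  | C a => simp
  | add p q hp hq =>
    convert add_mem hp hq using 1
    simp only [map_add]; ring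
  | mul_X p i hp =>
    simp only [map_mul, MvPolynomial.constantCoeff_X, mul_zero, map_zero, sub_zero]
    exact Ideal.mul_mem_left _ _ (Ideal.subset_span (Set.mem_range_self i))

lemma bigIdeal_le : bigIdeal R d ≤ (maximalIdeal R).comap MvPolynomial.constantCoeff := by
  refine sup_le ?_ ?_
  · rw [Ideal.map_le_iff_le_comap]
    intro r hr
    simpa using hr
  · refine Ideal.span_le.2 ?_
    rintro _ ⟨i, rfl⟩
    simp

lemma bigIdeal_isMaximal : (bigIdeal R d).IsMaximal := by
  have : bigIdeal R d = (maximalIdeal R).comap MvPolynomial.constantCoeff := by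
    refine le_antisymm bigIdeal_le fun f hf => ?_
    have := add_mem (le_sup_right (a := (maximalIdeal R).map MvPolynomial.C)
      (sub_C_constantCoeff_mem f)) (C_mem_bigIdeal (d := d) (show _ ∈ maximalIdeal R from hf))
    rwa [sub_add_cancel] at this
  rw [this]
  exact Ideal.comap_isMaximal_of_surjective _ fun c => ⟨MvPolynomial.C c, by simp⟩

variable {σ : ∀ s : ℕ, ResidueField R →+* R ⧸ (maximalIdeal R) ^ s}

/-- The map `R ⧸ m ^ s → R[ε] ⧸ (m, ε) ^ s` induced by the inclusion of constants. -/
noncomputable def cMap (R : Type) [CommRing R] [IsLocalRing R] (d s : ℕ) :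
    R ⧸ (maximalIdeal R) ^ s →+* MvPolynomial (Fin d) R ⧸ bigIdeal R d ^ s :=
  Ideal.quotientMap _ MvPolynomial.C <| by
    refine (Ideal.pow_right_mono (Ideal.map_le_iff_le_comap.1
      (le_sup_left (b := MvPolynomial.idealOfVars (Fin d) R))) s).trans (Ideal.le_comap_pow _ s)

/-- The map `R[ε] ⧸ (m, ε) ^ s → R ⧸ m ^ s` induced by `ε ↦ 0`. -/
noncomputable def piMap (R : Type) [CommRing R] [IsLocalRing R] (d s : ℕ) :
    MvPolynomial (Fin d) R ⧸ bigIdeal R d ^ s →+* R ⧸ (maximalIdeal R) ^ s :=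
  Ideal.quotientMap _ MvPolynomial.constantCoeff <|
    (Ideal.pow_right_mono bigIdeal_le s).trans (Ideal.le_comap_pow _ s)

/-- The map `k[X] → R[ε] ⧸ (m, ε) ^ s` sending `X i` to `x i + ε i`. -/
noncomputable def qMap (σ : ∀ s : ℕ, ResidueField R →+* R ⧸ (maximalIdeal R) ^ s)
    (x : Fin d → R) (s : ℕ) :
    MvPolynomial (Fin d) (ResidueField R) →+* MvPolynomial (Fin d) R ⧸ bigIdeal R d ^ s :=
  MvPolynomial.eval₂Hom ((cMap R d s).comp (σ s)) fun i =>
    Ideal.Quotient.mk _ (MvPolynomial.C (x i) + MvPolynomial.X i)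

lemma qMap_factor (hσ : IsCoefficientSystem σ) (x : Fin d → R) {s t : ℕ} (h : s ≤ t) (a) :
    Ideal.Quotient.factorPow (bigIdeal R d) h (qMap σ x t a) = qMap σ x s a := by
  have : (Ideal.Quotient.factorPow (bigIdeal R d) h).comp (qMap σ x t) = qMap σ x s := by
    refine MvPolynomial.ringHom_ext (fun c => ?_) fun i => ?_
    · have h1 := congr($(hσ.compat s t h) c)
      obtain ⟨r, hr⟩ := Ideal.Quotient.mk_surjective (σ t c)
      rw [RingHom.comp_apply, ← hr] at h1
      have h2 : Ideal.Quotient.mk _ r = σ s c := h1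
      simp [qMap, ← h2, ← hr, cMap]
    · simp [qMap]
  exact congr($this a)

lemma piMap_qMap (x : Fin d → R) (s : ℕ) (a) :
    piMap R d s (qMap σ x s a) = pMap σ x s a := by
  have : (piMap R d s).comp (qMap σ x s) = pMap σ x s := by
    refine MvPolynomial.ringHom_ext (fun c => ?_) fun i => ?_
    · obtain ⟨r, hr⟩ := Ideal.Quotient.mk_surjective (σ s c)
      simp [qMap, pMap, ← hr, cMap, piMap]
    · simp [qMap, pMap, piMap]
  exact congr($this a)

lemma idealOfVars_pow_le_ker_qMap (x : Fin d → R) (hx : ∀ i, x i ∈ maximalIdeal R) (s : ℕ) :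
    MvPolynomial.idealOfVars (Fin d) (ResidueField R) ^ s ≤ RingHom.ker (qMap σ x s) := by
  have h1 : MvPolynomial.idealOfVars (Fin d) (ResidueField R) ≤
      ((bigIdeal R d).map (Ideal.Quotient.mk (bigIdeal R d ^ s))).comap (qMap σ x s) := by
    refine Ideal.span_le.2 ?_
    rintro _ ⟨i, rfl⟩
    have : qMap σ x s (MvPolynomial.X i) =
      Ideal.Quotient.mk _ (MvPolynomial.C (x i) + MvPolynomial.X i) := by simp [qMap]
    rw [SetLike.mem_coe, Ideal.mem_comap, this]
    exact Ideal.mem_map_of_mem _ (add_mem (C_mem_bigIdeal (hx i)) (X_mem_bigIdeal i))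
  refine (Ideal.pow_right_mono h1 s).trans ((Ideal.le_comap_pow _ s).trans ?_)
  rw [← Ideal.map_pow, Ideal.map_quotient_self]
  exact le_rfl

/-- For a regular local ring `R` containing a field, with parameters `x i`, the completion of
`R[ε]` at `(m, ε)` carries a second `R`-algebra structure `τ`, with `τ (x i) = x i + ε i` and
`τ r ≡ r` modulo `ε`. Only the listed properties of the completion are recorded. -/
theorem exists_translation [IsNoetherianRing R]
    (hfield : ∃ (K : Type) (_ : Field K), Nonempty (K →+* R)) (x : Fin d → R)
    (hx : Ideal.span (Set.range x) = maximalIdeal R)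
    (hreg : RingTheory.Sequence.IsWeaklyRegular R (List.ofFn x)) :
    ∃ (S : Type) (_ : CommRing S) (_ : Algebra (MvPolynomial (Fin d) R) S) (τ : R →+* S),
      Module.Flat (MvPolynomial (Fin d) R) S ∧
      (∀ i, τ (x i) = algebraMap (MvPolynomial (Fin d) R) S (MvPolynomial.C (x i) + MvPolynomial.X i)) ∧
      (∀ r, τ r - algebraMap (MvPolynomial (Fin d) R) S (MvPolynomial.C r) ∈
        (MvPolynomial.idealOfVars (Fin d) R).map (algebraMap _ S)) ∧
      ((bigIdeal R d).map (algebraMap _ S)).IsMaximal := by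
  obtain ⟨σ, hσ1, hσ2⟩ := exists_coefficientField R hfield
  have hσ : IsCoefficientSystem σ := ⟨hσ1, hσ2⟩
  have hxm : ∀ i, x i ∈ maximalIdeal R := fun i => hx ▸ Ideal.subset_span ⟨i, rfl⟩
  have hker : ∀ s a, pMap σ x s a = 0 → qMap σ x s a = 0 := fun s a h =>
    idealOfVars_pow_le_ker_qMap x hxm s (ker_pMap_le hσ x hx hreg s h)
  -- `R ⧸ m ^ s` is `k[X] / (X) ^ s`, and substituting `x + ε` for `X` is well defined there
  have hex : ∀ s, ∃ f : R →+* MvPolynomial (Fin d) R ⧸ bigIdeal R d ^ s,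
      ∀ r a, pMap σ x s a = Ideal.Quotient.mk _ r → f r = qMap σ x s a := by
    intro s
    have hs := pMap_surjective hσ x hx s
    let f := (pMap σ x s).liftOfRightInverse _ (Function.rightInverse_surjInv hs)
      ⟨qMap σ x s, fun a ha => hker s a ha⟩
    refine ⟨f.comp (Ideal.Quotient.mk _), fun r a h => ?_⟩
    rw [RingHom.comp_apply, ← h]
    exact (pMap σ x s).liftOfRightInverse_comp_apply _ _ _ _
  choose f hf using hex
  have hcompat : ∀ {s t : ℕ} (h : s ≤ t),
      (Ideal.Quotient.factorPow (bigIdeal R d) h).comp (f t) = f s := by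
    intro s t h
    ext r
    obtain ⟨a, ha⟩ := pMap_surjective hσ x hx t (Ideal.Quotient.mk _ r)
    rw [RingHom.comp_apply, hf t r a ha, qMap_factor hσ]
    refine (hf s r a ?_).symm
    rw [← pMap_factor hσ x h, ha]; rfl
  let τ := AdicCompletion.liftRingHom (bigIdeal R d) f hcompat
  have hτ : ∀ s r, AdicCompletion.evalₐ _ s (τ r) = f s r := fun s r =>
    AdicCompletion.evalₐ_liftRingHom _ f hcompat s r
  have halg : ∀ s y, AdicCompletion.evalₐ (bigIdeal R d) s (algebraMap _ _ y) =
      Ideal.Quotient.mk _ y := fun s y => (AdicCompletion.evalₐ _ s).commutes y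
  refine ⟨AdicCompletion (bigIdeal R d) (MvPolynomial (Fin d) R), inferInstance, inferInstance,
    τ, inferInstance, ?_, ?_, ?_⟩
  · intro i
    refine AdicCompletion.ext_evalₐ fun s => ?_
    rw [hτ, halg, hf s (x i) (MvPolynomial.X i) (by simp [pMap])]
    simp [qMap]
  · intro r
    refine mem_map_of_forall_evalₐ _ _ _ fun s => ?_
    rw [map_sub, hτ, halg]
    obtain ⟨a, ha⟩ := pMap_surjective hσ x hx s (Ideal.Quotient.mk _ r)
    obtain ⟨y, hy⟩ := Ideal.Quotient.mk_surjective (f s r)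
    have h1 : Ideal.Quotient.mk (maximalIdeal R ^ s) (MvPolynomial.constantCoeff y) =
        Ideal.Quotient.mk _ r := by
      rw [← ha, ← piMap_qMap, ← hf s r a ha, ← hy]; simp [piMap]
    rw [Ideal.Quotient.eq] at h1
    have h2 : cMap R d s (Ideal.Quotient.mk _ (MvPolynomial.constantCoeff y - r)) = 0 := by
      rw [Ideal.Quotient.eq_zero_iff_mem.2 h1, map_zero]
    have h3 : Ideal.Quotient.mk (bigIdeal R d ^ s)
        (MvPolynomial.C (MvPolynomial.constantCoeff y - r)) = 0 := by simpa [cMap] using h2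
    -- both `y` and `C r` have the same constant term modulo `m ^ s`
    rw [← hy, ← map_sub]
    rw [show y - MvPolynomial.C r = (y - MvPolynomial.C (MvPolynomial.constantCoeff y)) +
      MvPolynomial.C (MvPolynomial.constantCoeff y - r) by rw [map_sub]; ring, map_add, h3,
      add_zero]
    exact Ideal.mem_map_of_mem _ (sub_C_constantCoeff_mem y)
  · have hfg : (bigIdeal R d).FG := IsNoetherian.noetherian _
    rw [← AdicCompletion.ker_evalOneₐ_eq_map _ hfg]
    have := bigIdeal_isMaximal (R := R) (d := d)
    let _ := Ideal.Quotient.field (bigIdeal R d)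
    exact RingHom.ker_isMaximal_of_surjective _ (AdicCompletion.evalOneₐ_surjective _)
end

end

/-! ### Vanishing of Tor and additivity of length -/

section
open IsLocalRing

section
variable {R S : Type} [CommRing R] [CommRing S] [Algebra R S]
  {N' F N : Type} [AddCommGroup N'] [Module R N'] [AddCommGroup F] [Module R F]
  [AddCommGroup N] [Module R N]
  {E₁ E₂ E₃ : Type} [AddCommGroup E₁] [Module S E₁] [Module R E₁] [IsScalarTower R S E₁]
  [AddCommGroup E₂] [Module S E₂] [Module R E₂] [IsScalarTower R S E₂]
  [AddCommGroup E₃] [Module S E₃] [Module R E₃] [IsScalarTower R S E₃]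

/-- For a flat cover `F → N` with kernel `j : N' → F`, injectivity of `E ⊗ j` expresses
`Tor₁(E, N) = 0`. This vanishing passes to extensions `E₂` of `E₃` by `E₁`, and makes
`- ⊗ N` exact on the extension. -/
lemma injective_and_length_of_exact [Module.Flat R F] (j : N' →ₗ[R] F) (p : F →ₗ[R] N)
    (hjp : Function.Exact j p) (hp : Function.Surjective p)
    (f : E₁ →ₗ[S] E₂) (g : E₂ →ₗ[S] E₃) (hf : Function.Injective f) (hfg : Function.Exact f g)
    (hg : Function.Surjective g)
    (h₁ : Function.Injective (j.lTensor E₁)) (h₃ : Function.Injective (j.lTensor E₃)) :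
    Function.Injective (j.lTensor E₂) ∧
      Module.length S (E₁ ⊗[R] N) + Module.length S (E₃ ⊗[R] N) =
        Module.length S (E₂ ⊗[R] N) := by
  let f' : E₁ →ₗ[R] E₂ := f.restrictScalars R
  let g' : E₂ →ₗ[R] E₃ := g.restrictScalars R
  have hfg' : Function.Exact f' g' := hfg
  have hN' : Function.Exact (f'.rTensor N') (g'.rTensor N') := rTensor_exact N' hfg' hg
  have hF : Function.Injective (f'.rTensor F) := Module.Flat.rTensor_preserves_injective_linearMap f' hf
  have cf : ∀ e, f'.rTensor F (j.lTensor E₁ e) = j.lTensor E₂ (f'.rTensor N' e) := fun e => by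
    rw [← LinearMap.comp_apply, ← LinearMap.comp_apply, LinearMap.lTensor_comp_rTensor,
      LinearMap.rTensor_comp_lTensor]
  have cg : ∀ e, g'.rTensor F (j.lTensor E₂ e) = j.lTensor E₃ (g'.rTensor N' e) := fun e => by
    rw [← LinearMap.comp_apply, ← LinearMap.comp_apply, LinearMap.lTensor_comp_rTensor,
      LinearMap.rTensor_comp_lTensor]
  have cp : ∀ e, f'.rTensor N (p.lTensor E₁ e) = p.lTensor E₂ (f'.rTensor F e) := fun e => by
    rw [← LinearMap.comp_apply, ← LinearMap.comp_apply, LinearMap.lTensor_comp_rTensor,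
      LinearMap.rTensor_comp_lTensor]
  -- an element of `E₂ ⊗ N'` whose image in `E₂ ⊗ F` dies in `E₃ ⊗ F` comes from `E₁ ⊗ N'`
  have lift : ∀ c, g'.rTensor F (j.lTensor E₂ c) = 0 → ∃ e, f'.rTensor N' e = c := by
    intro c hc
    rw [cg] at hc
    exact (hN' c).1 (h₃ (by rw [hc, map_zero]))
  refine ⟨?_, ?_⟩
  · rw [injective_iff_map_eq_zero]
    intro c hc
    obtain ⟨e, rfl⟩ := lift c (by rw [hc, map_zero])
    have : e = 0 := h₁ (hF (by rw [cf, hc, map_zero, map_zero]))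
    rw [this, map_zero]
  · have hinj : Function.Injective (f'.rTensor N) := by
      rw [injective_iff_map_eq_zero]
      intro a ha
      obtain ⟨b, rfl⟩ := LinearMap.lTensor_surjective E₁ hp a
      rw [cp] at ha
      obtain ⟨c, hc⟩ := (lTensor_exact E₂ hjp hp _).1 ha
      obtain ⟨e, rfl⟩ := lift c (by
        rw [hc, ← LinearMap.comp_apply, ← LinearMap.rTensor_comp, hfg'.linearMap_comp_eq_zero,
          LinearMap.rTensor_zero, LinearMap.zero_apply])
      have : j.lTensor E₁ e = b := hF (by rw [cf, hc])
      rw [← this]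
      exact (lTensor_exact E₁ hjp hp _).2 ⟨e, rfl⟩
    have ef : ∀ t, AlgebraTensorModule.map f (LinearMap.id : N →ₗ[R] N) t = f'.rTensor N t :=
      fun t => by
        induction t using TensorProduct.induction_on with
        | zero => simp only [map_zero]
        | tmul x y => rfl
        | add x y hx hy => simp only [map_add, hx, hy]
    have eg : ∀ t, AlgebraTensorModule.map g (LinearMap.id : N →ₗ[R] N) t = g'.rTensor N t :=
      fun t => by
        induction t using TensorProduct.induction_on with
        | zero => simp only [map_zero]
        | tmul x y => rfl
        | add x y hx hy => simp only [map_add, hx, hy]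
    have hN : Function.Exact (f'.rTensor N) (g'.rTensor N) := rTensor_exact N hfg' hg
    have hgs : Function.Surjective (g'.rTensor N) := LinearMap.rTensor_surjective N hg
    refine (Module.length_eq_add_of_exact
      (AlgebraTensorModule.map f (LinearMap.id : N →ₗ[R] N))
      (AlgebraTensorModule.map g (LinearMap.id : N →ₗ[R] N)) (fun a b hab => hinj ?_)
      (fun t => ?_) (fun t => ?_)).symm
    · rwa [ef, ef] at hab
    · obtain ⟨u, hu⟩ := hgs t
      exact ⟨u, by rw [eg, hu]⟩
    · rw [eg, hN t]
      exact ⟨fun ⟨u, hu⟩ => ⟨u, by rw [ef, hu]⟩, fun ⟨u, hu⟩ => ⟨u, by rw [← ef, hu]⟩⟩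

end

/-- If `Tor₁(M, N) = 0`, then `N` is a quotient `F / N'` of a projective module such that
`M ⊗ N' → M ⊗ F` is injective. -/
lemma exists_presentation_of_tor {R : Type} [CommRing R] (M N : Type) [AddCommGroup M]
    [Module R M] [AddCommGroup N] [Module R N]
    (htor : Subsingleton
      (((Tor (ModuleCat R) 1).obj (ModuleCat.of R M)).obj (ModuleCat.of R N))) :
    ∃ (N' F : Type) (_ : AddCommGroup N') (_ : Module R N') (_ : AddCommGroup F)
      (_ : Module R F) (j : N' →ₗ[R] F) (p : F →ₗ[R] N), Module.Flat R F ∧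
      Function.Exact j p ∧ Function.Surjective p ∧ Function.Injective (j.lTensor M) := by
  let X := ModuleCat.of R N
  let P : ProjectiveResolution X := projectiveResolution X
  let T := (MonoidalCategory.tensoringLeft (ModuleCat R)).obj (ModuleCat.of R M)
  -- exactness of `M ⊗ P₂ → M ⊗ P₁ → M ⊗ P₀`
  have hz : Limits.IsZero (((T.mapHomologicalComplex _).obj P.complex).homology 1) := by
    refine Limits.IsZero.of_iso ?_ (P.isoLeftDerivedObj T 1).symm
    exact ModuleCat.isZero_of_iff_subsingleton.2 htor
  have hex : ((T.mapHomologicalComplex (ComplexShape.down ℕ)).obj P.complex).ExactAt 1 :=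
    (HomologicalComplex.exactAt_iff_isZero_homology _ _).2 hz
  rw [HomologicalComplex.exactAt_iff' _ 2 1 0 (by simp) (by simp),
    ShortComplex.ShortExact.moduleCat_exact_iff_function_exact] at hex
  let d₁ := (P.complex.d 1 0).hom
  let d₂ := (P.complex.d 2 1).hom
  have hex' : Function.Exact (d₂.lTensor M) (d₁.lTensor M) := hex
  let π : P.complex.X 0 →ₗ[R] N := (P.π.f 0).hom
  have hπ : Function.Surjective π := by
    have : Epi (P.π.f 0) := inferInstance
    exact (ModuleCat.epi_iff_surjective _).1 this
  have h₁ : Function.Exact d₁ π := by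
    have := P.exact₀
    rw [ShortComplex.ShortExact.moduleCat_exact_iff_function_exact] at this
    exact this
  have h₂ : Function.Exact d₂ d₁ := by
    have := P.exact_succ 0
    rw [ShortComplex.ShortExact.moduleCat_exact_iff_function_exact] at this
    exact this
  have hfl : Module.Flat R (P.complex.X 0) := by
    have h : Projective (P.complex.X 0) := inferInstance
    have : Module.Projective R (P.complex.X 0) := (IsProjective.iff_projective _).2 h
    infer_instance
  -- `N'` is the kernel of `P₀ → N`, a quotient of `P₁`
  let q : P.complex.X 1 →ₗ[R] LinearMap.ker π := d₁.codRestrict _ h₁.apply_apply_eq_zero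
  have hq : Function.Surjective q := fun ⟨v, hv⟩ => by
    obtain ⟨u, hu⟩ := (h₁ v).1 hv
    exact ⟨u, Subtype.ext hu⟩
  have hqd : q ∘ₗ d₂ = 0 := by
    ext v
    exact h₂.apply_apply_eq_zero v
  refine ⟨LinearMap.ker π, P.complex.X 0, inferInstance, inferInstance, inferInstance,
    inferInstance, (LinearMap.ker π).subtype, π, hfl, LinearMap.exact_subtype_ker_map π, hπ, ?_⟩
  rw [injective_iff_map_eq_zero]
  intro t ht
  obtain ⟨u, rfl⟩ := LinearMap.lTensor_surjective M hq t
  have hu : d₁.lTensor M u = 0 := by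
    rw [← LinearMap.comp_apply, ← LinearMap.lTensor_comp] at ht
    exact ht
  obtain ⟨w, rfl⟩ := (hex' u).1 hu
  rw [← LinearMap.comp_apply, ← LinearMap.lTensor_comp, hqd, LinearMap.lTensor_zero,
    LinearMap.zero_apply]

end

/-! ### Flat base change -/

section
open IsLocalRing

section
variable {D S R : Type} [CommRing D] [CommRing S] [CommRing R] [Algebra D S] [Algebra R S]
  [SMulCommClass D R S] {N' F N : Type} [AddCommGroup N'] [Module R N'] [AddCommGroup F]
  [Module R F] [AddCommGroup N] [Module R N]

/-- The growth class of `D`-modules `W` such that `Tor₁(S ⊗ W, N) = 0` and `(S ⊗ W) ⊗ N` has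
`S`-length at least `a`; the `R`-structure on `S` is arbitrary and need not come from `D`. -/
lemma growthClass_good [Module.Flat D S] [Module.Flat R F] (j : N' →ₗ[R] F) (p : F →ₗ[R] N)
    (hjp : Function.Exact j p) (hp : Function.Surjective p) :
    GrowthClass D (fun W _ _ a => Function.Injective (j.lTensor (S ⊗[D] W)) ∧
      (a : ℕ∞) ≤ Module.length S ((S ⊗[D] W) ⊗[R] N)) where
  iso := by
    intro V W _ _ _ _ a e ⟨h1, h2⟩
    let f : S ⊗[D] V →ₗ[S] S ⊗[D] W := AlgebraTensorModule.lTensor S S e.toLinearMap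
    have hf : Function.Bijective f := (LinearEquiv.lTensor S e).bijective
    have := injective_and_length_of_exact (E₃ := PUnit) j p hjp hp f 0 hf.1
      (fun y => ⟨fun _ => hf.2 y, fun _ => rfl⟩) (fun y => ⟨0, rfl⟩) h1
      (Function.injective_of_subsingleton _)
    exact ⟨this.1, h2.trans (this.2 ▸ le_self_add)⟩
  ext := by
    intro V₁ V₂ V₃ _ _ _ _ _ _ f g a b hf hfg hg ⟨h1, h1'⟩ ⟨h3, h3'⟩
    have := injective_and_length_of_exact j p hjp hp
      (AlgebraTensorModule.lTensor S S f : S ⊗[D] V₁ →ₗ[S] S ⊗[D] V₂)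
      (AlgebraTensorModule.lTensor S S g : S ⊗[D] V₂ →ₗ[S] S ⊗[D] V₃)
      (Module.Flat.lTensor_preserves_injective_linearMap f hf)
      (lTensor_exact S hfg hg) (LinearMap.lTensor_surjective S hg) h1 h3
    refine ⟨this.1, ?_⟩
    rw [← this.2]
    push_cast
    exact add_le_add h1' h3'
end

/-- Flat base change of a nonzero element stays nonzero when its annihilator generates a proper
ideal. -/
lemma nontrivial_tensorProduct_of_flat {D S T : Type} [CommRing D] [CommRing S] [Algebra D S]
    [Module.Flat D S] [AddCommGroup T] [Module D T] (x : T) (J : Ideal D)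
    (hJ : ∀ f : D, f • x = 0 → f ∈ J) (hJS : J.map (algebraMap D S) ≠ ⊤) :
    Nontrivial (T ⊗[D] S) := by
  by_contra hT
  rw [not_nontrivial_iff_subsingleton] at hT
  let I : Ideal D := LinearMap.ker (LinearMap.toSpanSingleton D T x)
  have hIJ : I ≤ J := fun f hf => hJ f hf
  let u : (D ⧸ I) →ₗ[D] T := I.liftQ (LinearMap.toSpanSingleton D T x) le_rfl
  have hu : Function.Injective u := LinearMap.ker_eq_bot.1 (Submodule.ker_liftQ_eq_bot _ _ _ le_rfl)
  have h1 := (Module.Flat.rTensor_preserves_injective_linearMap (M := S) u hu).subsingleton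
  have h2 := (TensorProduct.quotTensorEquivQuotSMul S I).symm.toEquiv.subsingleton
  rw [Submodule.Quotient.subsingleton_iff] at h2
  have h3 : (1 : S) ∈ (I • ⊤ : Submodule D S) := by rw [h2]; trivial
  rw [Ideal.smul_top_eq_map] at h3
  exact hJS ((Ideal.eq_top_iff_one _).2 (Ideal.map_mono hIJ h3))

section
variable {D S R : Type} [CommRing D] [CommRing S] [CommRing R] [Algebra D S] [Algebra R S]
  [SMulCommClass D R S] {M N' F : Type} [AddCommGroup M] [Module R M] [Module D M]
  [Algebra R D] [IsScalarTower R D M]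
  [AddCommGroup N'] [Module R N'] [AddCommGroup F] [Module R F]

/-- If the `R`-structures through `S` and through `M` agree on `S ⊗[D] M`, then
`(S ⊗[D] M) ⊗[R] Y` is the base change to `S` of `M ⊗[R] Y`. -/
noncomputable def shuffleEquiv (hb : ∀ (r : R) (s : S) (m : M), (r • s) ⊗ₜ[D] m = s ⊗ₜ[D] (r • m))
    (Y : Type) [AddCommGroup Y] [Module R Y] :
    (S ⊗[D] M) ⊗[R] Y ≃+ (M ⊗[R] Y) ⊗[D] S :=
  let e : S ⊗[D] M ≃ₗ[R] M ⊗[D] S :=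
    { TensorProduct.comm D S M with
      map_smul' := fun r t => by
        induction t using TensorProduct.induction_on with
        | zero => simp
        | tmul s m =>
          rw [smul_tmul', hb]; rfl
        | add a b ha hb =>
          rw [smul_add]
          simp only [AddHom.toFun_eq_coe, LinearMap.coe_toAddHom, LinearEquiv.coe_coe, map_add,
            smul_add] at ha hb ⊢
          rw [ha, hb] }
  (LinearEquiv.rTensor Y e).toAddEquiv.trans
    (AlgebraTensorModule.rightComm R D D M S Y).toAddEquiv

lemma shuffleEquiv_tmul (hb : ∀ (r : R) (s : S) (m : M), (r • s) ⊗ₜ[D] m = s ⊗ₜ[D] (r • m))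
    {Y : Type} [AddCommGroup Y] [Module R Y] (s : S) (m : M) (y : Y) :
    shuffleEquiv hb Y ((s ⊗ₜ[D] m) ⊗ₜ[R] y) = (m ⊗ₜ[R] y) ⊗ₜ[D] s := rfl

/-- `Tor₁`-vanishing for `M` is inherited by its flat base change `S ⊗ M`. -/
lemma injective_lTensor_baseChange [Module.Flat D S]
    (hb : ∀ (r : R) (s : S) (m : M), (r • s) ⊗ₜ[D] m = s ⊗ₜ[D] (r • m))
    (j : N' →ₗ[R] F) (hj : Function.Injective (j.lTensor M)) :
    Function.Injective (j.lTensor (S ⊗[D] M)) := by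
  let j' : M ⊗[R] N' →ₗ[D] M ⊗[R] F := AlgebraTensorModule.lTensor D M j
  have hj' : Function.Injective (j'.rTensor S) :=
    Module.Flat.rTensor_preserves_injective_linearMap j' hj
  have key : ∀ t, shuffleEquiv hb F (j.lTensor (S ⊗[D] M) t) =
      j'.rTensor S (shuffleEquiv hb N' t) := fun t => by
    induction t using TensorProduct.induction_on with
    | zero => simp only [map_zero]
    | add a b ha hb => simp only [map_add, ha, hb]
    | tmul t y =>
      induction t using TensorProduct.induction_on with
      | zero => simp only [map_zero, zero_tmul]
      | add a b ha hb => simp only [add_tmul, map_add, ha, hb]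
      | tmul s m => rfl
  intro a b hab
  refine (shuffleEquiv hb N').injective (hj' ?_)
  rw [← key, ← key, hab]
end

end

/-! ### The variables form a regular sequence on `R[X] ⊗ M` -/

section
open IsLocalRing

lemma span_smul_top_induction {U V : Type} [CommRing U] [AddCommGroup V] [Module U V] {s : Set U}
    {p : V → Prop} (h0 : p 0) (hadd : ∀ v w, p v → p w → p (v + w))
    (h : ∀ r ∈ s, ∀ v, p (r • v)) : ∀ v ∈ (Ideal.span s • ⊤ : Submodule U V), p v := by
  intro v hv
  refine Submodule.smul_induction_on hv (fun r hr n _ => ?_) fun x y => hadd x y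
  induction hr using Submodule.span_induction generalizing n with
  | mem r hr => exact h r hr n
  | zero => rwa [zero_smul]
  | add a b _ _ ha hb => rw [add_smul]; exact hadd _ _ (ha n trivial) (hb n trivial)
  | smul a r _ hr => rw [smul_eq_mul, mul_comm, mul_smul]; exact hr _ trivial

section
variable {R : Type} [CommRing R] {d : ℕ} {M : Type} [AddCommGroup M] [Module R M]

/-- Division by the variable `X i`, discarding the monomials not divisible by it. -/
noncomputable def divX (i : Fin d) : MvPolynomial (Fin d) R →ₗ[R] MvPolynomial (Fin d) R where
  toFun f := f.divMonomial (Finsupp.single i 1)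
  map_add' f g := MvPolynomial.add_divMonomial _ _ _
  map_smul' r f := by
    ext s
    simp

lemma divX_X_mul_self (i : Fin d) (f : MvPolynomial (Fin d) R) :
    divX i (MvPolynomial.X i * f) = f := MvPolynomial.X_mul_divMonomial i f

lemma divX_X_mul_of_ne {i k : Fin d} (h : k ≠ i) (f : MvPolynomial (Fin d) R) :
    divX i (MvPolynomial.X k * f) = MvPolynomial.X k * divX i f := by
  classical
  ext s
  change MvPolynomial.coeff s ((MvPolynomial.X k * f).divMonomial _) = _
  rw [MvPolynomial.coeff_divMonomial, MvPolynomial.coeff_X_mul', MvPolynomial.coeff_X_mul']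
  have h1 : k ∈ (Finsupp.single i 1 + s).support ↔ k ∈ s.support := by
    simp [h.symm]
  simp only [h1]
  split_ifs with h2
  · change _ = MvPolynomial.coeff _ (f.divMonomial _)
    rw [MvPolynomial.coeff_divMonomial]
    congr 1
    have : Finsupp.single k 1 ≤ s := by
      rw [Finsupp.single_le_iff]
      rw [Finsupp.mem_support_iff] at h2
      omega
    rw [add_tsub_assoc_of_le this]
  · rfl

lemma rTensor_divX_X_smul_self (i : Fin d) (v : MvPolynomial (Fin d) R ⊗[R] M) :
    (divX i).rTensor M ((MvPolynomial.X i : MvPolynomial (Fin d) R) • v) = v := by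
  induction v using TensorProduct.induction_on with
  | zero => simp
  | add a b ha hb => rw [smul_add, map_add, ha, hb]
  | tmul f m => rw [smul_tmul', LinearMap.rTensor_tmul, smul_eq_mul, divX_X_mul_self]

lemma rTensor_divX_X_smul_of_ne {i k : Fin d} (h : k ≠ i) (v : MvPolynomial (Fin d) R ⊗[R] M) :
    (divX i).rTensor M ((MvPolynomial.X k : MvPolynomial (Fin d) R) • v) =
      (MvPolynomial.X k : MvPolynomial (Fin d) R) • (divX i).rTensor M v := by
  induction v using TensorProduct.induction_on with
  | zero => simp
  | add a b ha hb => rw [smul_add, map_add, ha, hb, map_add, smul_add]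
  | tmul f m =>
    rw [smul_tmul', LinearMap.rTensor_tmul, smul_eq_mul, divX_X_mul_of_ne h,
      LinearMap.rTensor_tmul, smul_tmul', smul_eq_mul]

/-- The variables form a weakly regular sequence on `R[X] ⊗ M`. -/
lemma isWeaklyRegular_X (d : ℕ) (M : Type) [AddCommGroup M] [Module R M] :
    RingTheory.Sequence.IsWeaklyRegular (MvPolynomial (Fin d) R ⊗[R] M)
      (List.ofFn (fun i : Fin d => (MvPolynomial.X i : MvPolynomial (Fin d) R))) := by
  refine ⟨fun i hi => ?_⟩
  have hi' : i < d := by simpa using hi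
  set J : Submodule (MvPolynomial (Fin d) R) (MvPolynomial (Fin d) R ⊗[R] M) :=
    Ideal.ofList ((List.ofFn fun i : Fin d => (MvPolynomial.X i : MvPolynomial (Fin d) R)).take i)
      • ⊤ with hJ
  have key : ∀ v ∈ J, (divX ⟨i, hi'⟩).rTensor M v ∈ J := by
    refine span_smul_top_induction (by simp) (fun v w hv hw => by
      rw [map_add]; exact add_mem hv hw) fun r ha v => ?_
    obtain ⟨k, hk, rfl⟩ := List.mem_iff_getElem.1 ha
    have hk' : k < i := by
      rw [List.length_take] at hk
      omega
    rw [List.getElem_take, List.getElem_ofFn,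
      rTensor_divX_X_smul_of_ne (by simp [Fin.ext_iff]; omega)]
    refine Submodule.smul_mem_smul (Ideal.subset_span ?_) trivial
    have := List.getElem_mem hk
    rwa [List.getElem_take, List.getElem_ofFn] at this
  rw [isSMulRegular_iff_right_eq_zero_of_smul]
  intro v hv
  obtain ⟨v, rfl⟩ := Submodule.Quotient.mk_surjective _ v
  rw [← Submodule.Quotient.mk_smul, Submodule.Quotient.mk_eq_zero] at hv
  rw [Submodule.Quotient.mk_eq_zero]
  have := key _ hv
  rwa [List.getElem_ofFn, rTensor_divX_X_smul_self] at this

variable [Module (MvPolynomial (Fin d) R) M] [IsScalarTower R (MvPolynomial (Fin d) R) M]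

/-- If the variables act as zero on `M`, then `R[X] ⊗ M` modulo the variables is `M`. -/
noncomputable def quotXEquiv
    (hX : ∀ (i : Fin d) (m : M), (MvPolynomial.X i : MvPolynomial (Fin d) R) • m = 0) :
    ((MvPolynomial (Fin d) R ⊗[R] M) ⧸ (Ideal.ofList (List.ofFn
      (fun i : Fin d => (MvPolynomial.X i : MvPolynomial (Fin d) R))) • ⊤ :
        Submodule (MvPolynomial (Fin d) R) (MvPolynomial (Fin d) R ⊗[R] M)))
      ≃ₗ[MvPolynomial (Fin d) R] M := by
  let μ : MvPolynomial (Fin d) R ⊗[R] M →ₗ[MvPolynomial (Fin d) R] M :=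
    (LinearMap.id : M →ₗ[R] M).liftBaseChange _
  have hμ : Function.Surjective μ := fun m => ⟨1 ⊗ₜ m, by simp [μ]⟩
  refine (Submodule.quotEquivOfEq _ _ ?_).trans (μ.quotKerEquivOfSurjective hμ)
  rw [ofList_ofFn]
  have h0 : ∀ g ∈ MvPolynomial.idealOfVars (Fin d) R, ∀ m : M, g • m = 0 := by
    intro g hg m
    induction hg using Submodule.span_induction with
    | mem r hr => obtain ⟨i, rfl⟩ := hr; exact hX i m
    | zero => rw [zero_smul]
    | add a b _ _ ha hb => rw [add_smul, ha, hb, add_zero]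
    | smul a r _ hr => rw [smul_assoc, hr, smul_zero]
  refine le_antisymm (fun v hv => ?_) fun v hv => ?_
  · refine span_smul_top_induction (zero_mem _) (fun v w hv hw => add_mem hv hw) ?_ v hv
    rintro _ ⟨i, rfl⟩ v
    rw [LinearMap.mem_ker, map_smul, hX]
  · have key : v - 1 ⊗ₜ μ v ∈ (MvPolynomial.idealOfVars (Fin d) R • ⊤ :
        Submodule (MvPolynomial (Fin d) R) (MvPolynomial (Fin d) R ⊗[R] M)) := by
      clear hv
      induction v using TensorProduct.induction_on with
      | zero => simp
      | add a b ha hb =>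
        rw [map_add, tmul_add, add_sub_add_comm]; exact add_mem ha hb
      | tmul f m =>
        have h1 : f • m = MvPolynomial.constantCoeff f • m := by
          have := h0 _ (sub_C_constantCoeff_mem f) m
          rw [sub_smul, sub_eq_zero, ← MvPolynomial.algebraMap_eq, algebraMap_smul] at this
          exact this
        have : f ⊗ₜ[R] m - 1 ⊗ₜ μ (f ⊗ₜ m) =
            (f - MvPolynomial.C (MvPolynomial.constantCoeff f)) •
              ((1 : MvPolynomial (Fin d) R) ⊗ₜ[R] m) := by
          have h2 : μ (f ⊗ₜ m) = MvPolynomial.constantCoeff f • m := by simp [μ, h1]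
          rw [h2, smul_tmul', smul_eq_mul, mul_one, sub_tmul, ← MvPolynomial.algebraMap_eq,
            Algebra.algebraMap_eq_smul_one, smul_tmul]
        rw [this]
        exact Submodule.smul_mem_smul (sub_C_constantCoeff_mem f) trivial
    rw [LinearMap.mem_ker] at hv
    rwa [hv, tmul_zero, sub_zero] at key
end

end

/-! ### Lower bound for the family of translates -/

section
open IsLocalRing

section
variable {R : Type} [CommRing R] [IsLocalRing R] {d : ℕ}

/-- The quotient of `R[X] ⊗ M` by the `n`-th powers of the variables. -/
abbrev Thick (R M : Type) [CommRing R] [AddCommGroup M] [Module R M] (d n : ℕ) : Type :=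
  (MvPolynomial (Fin d) R ⊗[R] M) ⧸ (Ideal.ofList ((List.ofFn
      (fun i : Fin d => (MvPolynomial.X i : MvPolynomial (Fin d) R))).map (· ^ n)) • ⊤ :
        Submodule (MvPolynomial (Fin d) R) (MvPolynomial (Fin d) R ⊗[R] M))

/-- The lower bound `n ^ d` for the family of translates: `Thick R M d n` is filtered by `n ^ d` copies
of `M`, on which `R` acts through `τ` as it does through constants, and `Tor₁`-vanishing makes the
lengths of the pieces add up. The injectivity of `j.lTensor M` is the vanishing of `Tor₁(M, N)`. -/
theorem pow_le_length_thick {S : Type} [CommRing S] [Algebra (MvPolynomial (Fin d) R) S]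
    [Algebra R S] [SMulCommClass (MvPolynomial (Fin d) R) R S]
    [Module.Flat (MvPolynomial (Fin d) R) S]
    (hτ : ∀ r : R, algebraMap R S r - algebraMap (MvPolynomial (Fin d) R) S (MvPolynomial.C r) ∈
        (MvPolynomial.idealOfVars (Fin d) R).map (algebraMap _ S))
    (hmax : (bigIdeal R d).map (algebraMap (MvPolynomial (Fin d) R) S) ≠ ⊤)
    {M N N' F : Type} [AddCommGroup M] [Module R M] [AddCommGroup N] [Module R N]
    [AddCommGroup N'] [Module R N'] [AddCommGroup F] [Module R F] [Module.Flat R F]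
    (j : N' →ₗ[R] F) (p : F →ₗ[R] N) (hjp : Function.Exact j p) (hp : Function.Surjective p)
    (hj : Function.Injective (j.lTensor M)) [Nontrivial (M ⊗[R] N)] (n : ℕ) :
    (((n + 1) ^ d : ℕ) : ℕ∞) ≤
      Module.length S ((S ⊗[MvPolynomial (Fin d) R] Thick R M d (n + 1)) ⊗[R] N) := by
  -- let the variables act as zero on `M`, as they do on the graded pieces of `Thick R M d n`
  let _ : Module (MvPolynomial (Fin d) R) M := Module.compHom M MvPolynomial.constantCoeff
  have hsm : ∀ (f : MvPolynomial (Fin d) R) (m : M), f • m = MvPolynomial.constantCoeff f • m :=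
    fun _ _ => rfl
  have : IsScalarTower R (MvPolynomial (Fin d) R) M := ⟨fun r f m => by
    rw [hsm, hsm, ← smul_assoc]; simp⟩
  have hX : ∀ (i : Fin d) (m : M), (MvPolynomial.X i : MvPolynomial (Fin d) R) • m = 0 := by
    intro i m
    rw [hsm]; simp
  have hvars : ∀ z ∈ (MvPolynomial.idealOfVars (Fin d) R).map
      (algebraMap (MvPolynomial (Fin d) R) S), ∀ (s : S) (m : M),
      (z * s) ⊗ₜ[MvPolynomial (Fin d) R] m = 0 := by
    intro z hz
    rw [MvPolynomial.idealOfVars, Ideal.map_span] at hz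
    induction hz using Submodule.span_induction with
    | mem z hz =>
      obtain ⟨_, ⟨i, rfl⟩, rfl⟩ := hz
      intro s m
      rw [← Algebra.smul_def, smul_tmul, hX, tmul_zero]
    | zero => intro s m; rw [zero_mul, zero_tmul]
    | add a b _ _ ha hb => intro s m; rw [add_mul, add_tmul, ha, hb, add_zero]
    | smul a z _ hz =>
      intro s m
      rw [smul_eq_mul, mul_comm a, mul_assoc, hz]
  -- modulo the variables, the two `R`-structures on `S` coincide
  have hb : ∀ (r : R) (s : S) (m : M),
      (r • s) ⊗ₜ[MvPolynomial (Fin d) R] m = s ⊗ₜ (r • m) := by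
    intro r s m
    have h1 := hvars _ (hτ r) s m
    rw [sub_mul, sub_tmul, sub_eq_zero, ← Algebra.smul_def, ← Algebra.smul_def,
      smul_tmul (MvPolynomial.C r), hsm, MvPolynomial.constantCoeff_C] at h1
    exact h1
  have hG := growthClass_good (D := MvPolynomial (Fin d) R) (S := S) j p hjp hp
  have hM : Function.Injective (j.lTensor (S ⊗[MvPolynomial (Fin d) R] M)) ∧
      ((1 : ℕ) : ℕ∞) ≤ Module.length S ((S ⊗[MvPolynomial (Fin d) R] M) ⊗[R] N) := by
    refine ⟨injective_lTensor_baseChange hb j hj, ?_⟩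
    obtain ⟨x, hx⟩ := exists_ne (0 : M ⊗[R] N)
    have hT := nontrivial_tensorProduct_of_flat (S := S) x (bigIdeal R d) (fun f hf => ?_) hmax
    · have := (shuffleEquiv hb N).toEquiv.nontrivial
      rw [Nat.cast_one, Order.one_le_iff_ne_zero]
      exact (Module.length_pos_iff.2 this).ne'
    · have hfx : ∀ t : M ⊗[R] N, f • t = MvPolynomial.constantCoeff f • t := fun t => by
        induction t using TensorProduct.induction_on with
        | zero => rw [smul_zero, smul_zero]
        | add a b ha hb => rw [smul_add, smul_add, ha, hb]
        | tmul m y => rw [smul_tmul', smul_tmul', hsm]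
      have hc : MvPolynomial.constantCoeff f ∈ maximalIdeal R := by
        rw [mem_maximalIdeal, mem_nonunits_iff]
        intro hu
        rw [hfx] at hf
        exact hx (hu.smul_eq_zero.1 hf)
      have := add_mem (le_sup_right (a := (maximalIdeal R).map MvPolynomial.C)
        (sub_C_constantCoeff_mem f)) (C_mem_bigIdeal (d := d) hc)
      rwa [sub_add_cancel] at this
  have hM' := hG.iso _ _ _ (quotXEquiv hX).symm hM
  have := hG.quot_ofList_pow _ (isWeaklyRegular_X d M) hM' n
  simpa using this.2
end

end

/-! ### Finite length and annihilators -/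

section
open IsLocalRing

/-- The support of a tensor product of finitely generated modules contains the intersection of
the supports. -/
lemma annihilator_tensorProduct_le {R M N : Type} [CommRing R] [AddCommGroup M] [Module R M]
    [AddCommGroup N] [Module R N] [Module.Finite R M] [Module.Finite R N] (p : Ideal R)
    [hp : p.IsPrime] (hM : Module.annihilator R M ≤ p) (hN : Module.annihilator R N ≤ p) :
    Module.annihilator R (M ⊗[R] N) ≤ p := by
  have hM' := (Module.mem_support_iff_nontrivial_residueField_tensorProduct ⟨p, hp⟩).1
    (Module.mem_support_iff_of_finite.2 hM)
  have hN' := (Module.mem_support_iff_nontrivial_residueField_tensorProduct ⟨p, hp⟩).1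
    (Module.mem_support_iff_of_finite.2 hN)
  refine Module.mem_support_iff_of_finite.1
    ((Module.mem_support_iff_nontrivial_residueField_tensorProduct ⟨p, hp⟩).2 ?_)
  exact (AlgebraTensorModule.distribBaseChange R p.ResidueField M N).toEquiv.nontrivial

lemma nontrivial_tensorProduct_of_isLocalRing {R M N : Type} [CommRing R] [IsLocalRing R]
    [AddCommGroup M] [Module R M] [AddCommGroup N] [Module R N] [Module.Finite R M]
    [Module.Finite R N] [Nontrivial M] [Nontrivial N] : Nontrivial (M ⊗[R] N) := by
  have h := annihilator_tensorProduct_le (M := M) (N := N) (maximalIdeal R)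
    (le_maximalIdeal fun h => ?_) (le_maximalIdeal fun h => ?_)
  · by_contra hc
    rw [not_nontrivial_iff_subsingleton] at hc
    rw [Module.annihilator_eq_top_iff.2 hc] at h
    exact Ideal.IsPrime.ne_top' (top_le_iff.1 h)
  · exact not_subsingleton M (Module.annihilator_eq_top_iff.1 h)
  · exact not_subsingleton N (Module.annihilator_eq_top_iff.1 h)

section
variable {R : Type} [CommRing R] [IsLocalRing R]

lemma maximalIdeal_smul_mem_of_isSimpleModule {T : Type} [AddCommGroup T] [Module R T]
    (T' : Submodule R T) [IsSimpleModule R (T ⧸ T')] {r : R} (hr : r ∈ maximalIdeal R) (t : T) :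
    r • t ∈ T' := by
  have h : IsSimpleModule R (T ⧸ T') := inferInstance
  obtain ⟨J, hJ, ⟨e⟩⟩ := isSimpleModule_iff_quot_maximal.1 h
  rw [eq_maximalIdeal hJ] at e
  rw [← Submodule.Quotient.mk_eq_zero, Submodule.Quotient.mk_smul]
  refine e.injective ?_
  rw [map_smul, map_zero]
  obtain ⟨y, hy⟩ := Ideal.Quotient.mk_surjective (e (Submodule.Quotient.mk t))
  rw [← hy, Algebra.smul_def, Ideal.Quotient.algebraMap_eq, ← map_mul]
  exact Ideal.Quotient.eq_zero_iff_mem.2 (Ideal.mul_mem_right _ _ hr)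

lemma exists_pow_le_annihilator {T : Type} [AddCommGroup T] [Module R T]
    (h : IsFiniteLength R T) : ∃ c, maximalIdeal R ^ c ≤ Module.annihilator R T := by
  induction h with
  | of_subsingleton => exact ⟨0, by rw [Module.annihilator_eq_top_iff.2 ‹_›]; exact le_top⟩
  | @of_simple_quotient T _ _ T' _ _ ih =>
    obtain ⟨c, hc⟩ := ih
    refine ⟨c + 1, ?_⟩
    rw [pow_succ, Ideal.mul_le]
    intro r hr s hs
    rw [Module.mem_annihilator]
    intro t
    have := Module.mem_annihilator.1 (hc hr) ⟨s • t, maximalIdeal_smul_mem_of_isSimpleModule T' hs t⟩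
    rw [mul_smul]
    exact congr_arg Subtype.val this

/-- A power of the maximal ideal lies in `ann M + ann N` when `M ⊗ N` has finite length. -/
lemma exists_pow_le_annihilator_sup [IsNoetherianRing R] {M N : Type} [AddCommGroup M]
    [Module R M] [AddCommGroup N] [Module R N] [Module.Finite R M] [Module.Finite R N]
    (h : IsFiniteLength R (M ⊗[R] N)) :
    ∃ c, maximalIdeal R ^ c ≤ Module.annihilator R M ⊔ Module.annihilator R N := by
  obtain ⟨c, hc⟩ := exists_pow_le_annihilator h
  refine Ideal.exists_pow_le_of_le_radical_of_fg ?_ (IsNoetherian.noetherian _)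
  rw [Ideal.radical_eq_sInf]
  refine le_sInf fun p ⟨hle, hp⟩ => ?_
  have := annihilator_tensorProduct_le (M := M) (N := N) p (le_sup_left.trans hle)
    (le_sup_right.trans hle)
  exact Ideal.IsPrime.le_of_pow_le (hc.trans this)
end

/-- The pigeonhole bound: a monomial of degree at least `(|rs| + 1) * n` in the members of `rs` is
divisible by the `n`-th power of one of them. -/
lemma ofList_pow_le {U : Type} [CommRing U] (rs : List U) {n : ℕ} (hn : n ≠ 0) :
    Ideal.ofList rs ^ ((rs.length + 1) * n) ≤ Ideal.ofList (rs.map (· ^ n)) := by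
  induction rs with
  | nil => simp [Ideal.ofList_nil, hn]
  | cons r rs ih =>
    rw [List.map_cons, Ideal.ofList_cons, Ideal.ofList_cons, List.length_cons,
      add_mul (rs.length + 1), one_mul, add_comm _ n]
    refine Ideal.sup_pow_add_le_pow_sup_pow.trans (sup_le_sup ?_ ih)
    rw [Ideal.span_singleton_pow]

/-- Length of `E ⊗ N` is bounded by the length of `N` times that of `E ⊗ k`. -/
lemma length_tensorProduct_le {R S : Type} [CommRing R] [IsLocalRing R] [CommRing S] [Algebra R S]
    {E : Type} [AddCommGroup E] [Module R E] [Module S E] [IsScalarTower R S E]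
    {N : Type} [AddCommGroup N] [Module R N] (h : IsFiniteLength R N) :
    Module.length S (E ⊗[R] N) ≤
      Module.length R N * Module.length S (E ⊗[R] (R ⧸ maximalIdeal R)) := by
  induction h with
  | of_subsingleton => rw [Module.length_eq_zero]; exact zero_le
  | @of_simple_quotient T _ _ T' hs _ ih =>
    have h := hs
    obtain ⟨J, hJ, ⟨e⟩⟩ := isSimpleModule_iff_quot_maximal.1 h
    rw [eq_maximalIdeal hJ] at e
    have h1 : Module.length S (E ⊗[R] T) ≤
        Module.length S (E ⊗[R] T') + Module.length S (E ⊗[R] (T ⧸ T')) :=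
      Module.length_le_add_of_exact (AlgebraTensorModule.lTensor S E T'.subtype)
        (AlgebraTensorModule.lTensor S E T'.mkQ)
        (lTensor_exact E (LinearMap.exact_subtype_mkQ T') T'.mkQ_surjective)
        (LinearMap.lTensor_surjective E T'.mkQ_surjective)
    rw [(AlgebraTensorModule.congr (LinearEquiv.refl S E) e).length_eq] at h1
    rw [Module.length_eq_add_of_exact T'.subtype T'.mkQ T'.subtype_injective T'.mkQ_surjective
      (LinearMap.exact_subtype_mkQ T'), Module.length_eq_one R (T ⧸ T'), add_mul, one_mul]
    exact h1.trans (add_le_add_left ih _)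

/-- If `Y` is generated by the image of a finite length `R`-module under a map semilinear along
`lam : R → S`, then its length is at most that of the source, provided a maximal ideal `P` of `S`
is generated by `lam (m)` up to the annihilator of `Y`. -/
lemma length_le_of_semilinear {R S : Type} [CommRing R] [IsLocalRing R] [CommRing S]
    (lam : R →+* S) (P : Ideal S) [P.IsMaximal] {T : Type} [AddCommGroup T] [Module R T]
    (h : IsFiniteLength R T) {Y : Type} [AddCommGroup Y] [Module S Y]
    (hP : P ≤ (maximalIdeal R).map lam ⊔ Module.annihilator S Y) (ψ : T →ₛₗ[lam] Y)
    (hψ : Submodule.span S (Set.range ψ) = ⊤) :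
    Module.length S Y ≤ Module.length R T := by
  induction h generalizing Y with
  | of_subsingleton =>
    have : Subsingleton Y := by
      rw [← Submodule.subsingleton_iff S, ← subsingleton_iff_bot_eq_top, ← hψ, eq_comm,
        Submodule.span_eq_bot]
      rintro _ ⟨t, rfl⟩
      rw [Subsingleton.elim t 0, map_zero]
    rw [Module.length_eq_zero]; exact zero_le
  | @of_simple_quotient T _ _ T' hs _ ih =>
    let Y' : Submodule S Y := Submodule.span S (Set.range fun t : T' => ψ t)
    let ψ' : T' →ₛₗ[lam] Y' :=
      { toFun := fun t => ⟨ψ t, Submodule.subset_span ⟨t, rfl⟩⟩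
        map_add' := fun a b => Subtype.ext (by simp)
        map_smul' := fun r a => Subtype.ext (by simp) }
    have h1 : Module.length S Y' ≤ Module.length R T' := by
      refine ih (hP.trans (sup_le_sup_left ?_ _)) ψ' ?_
      · exact LinearMap.annihilator_le_of_injective Y'.subtype Y'.subtype_injective
      · refine Submodule.map_injective_of_injective Y'.subtype_injective ?_
        rw [Submodule.map_span, ← Set.range_comp, Submodule.map_top, Submodule.range_subtype]
        rfl
    have h2 : Module.length S (Y ⧸ Y') ≤ 1 := by
      obtain ⟨v, hv⟩ : ∃ v, v ∉ T' := by
        by_contra hc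
        push Not at hc
        have := IsSimpleModule.nontrivial R (T ⧸ T')
        exact (Submodule.Quotient.nontrivial_iff.1 this) (eq_top_iff.2 fun v _ => hc v)
      let y : Y ⧸ Y' := Submodule.Quotient.mk (ψ v)
      have hy : P ≤ LinearMap.ker (LinearMap.toSpanSingleton S (Y ⧸ Y') y) := by
        refine hP.trans (sup_le ?_ ?_)
        · rw [Ideal.map_le_iff_le_comap]
          intro r hr
          rw [Ideal.mem_comap, LinearMap.mem_ker, LinearMap.toSpanSingleton_apply,
            ← Submodule.Quotient.mk_smul, Submodule.Quotient.mk_eq_zero, ← map_smulₛₗ]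
          exact Submodule.subset_span ⟨⟨_, maximalIdeal_smul_mem_of_isSimpleModule T' hr v⟩, rfl⟩
        · intro s hs
          rw [LinearMap.mem_ker, LinearMap.toSpanSingleton_apply,
            ← Submodule.Quotient.mk_smul, Module.mem_annihilator.1 hs, Submodule.Quotient.mk_zero]
      let g : (S ⧸ P) →ₗ[S] Y ⧸ Y' := P.liftQ _ hy
      have hg : Function.Surjective g := by
        rw [← LinearMap.range_eq_top, eq_top_iff, ← Submodule.range_mkQ Y', ← Submodule.map_top,
          ← hψ, Submodule.map_span, Submodule.span_le]
        rintro _ ⟨_, ⟨t, rfl⟩, rfl⟩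
        have hv0 : (Submodule.Quotient.mk v : T ⧸ T') ≠ 0 := by
          rwa [Ne, Submodule.Quotient.mk_eq_zero]
        obtain ⟨r, hr⟩ := IsSimpleModule.toSpanSingleton_surjective R hv0 (Submodule.Quotient.mk t)
        rw [LinearMap.toSpanSingleton_apply, ← Submodule.Quotient.mk_smul, eq_comm,
          Submodule.Quotient.eq] at hr
        refine ⟨Ideal.Quotient.mk P (lam r), ?_⟩
        have h3 : (Submodule.Quotient.mk (ψ (t - r • v)) : Y ⧸ Y') = 0 :=
          (Submodule.Quotient.mk_eq_zero _).2 (Submodule.subset_span ⟨⟨_, hr⟩, rfl⟩)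
        rw [map_sub, Submodule.Quotient.mk_sub, sub_eq_zero, map_smulₛₗ] at h3
        exact h3.symm
      have : IsSimpleModule S (S ⧸ P) := isSimpleModule_iff_isCoatom.2 (Ideal.isMaximal_def.1 ‹_›)
      exact (Module.length_le_of_surjective g hg).trans (Module.length_eq_one S (S ⧸ P)).le
    rw [Module.length_eq_add_of_exact T'.subtype T'.mkQ T'.subtype_injective T'.mkQ_surjective
      (LinearMap.exact_subtype_mkQ T'), Module.length_eq_one R (T ⧸ T'),
      Module.length_eq_add_of_exact Y'.subtype Y'.mkQ Y'.subtype_injective Y'.mkQ_surjective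
      (LinearMap.exact_subtype_mkQ Y')]
    exact add_le_add h1 h2

end

/-! ### Upper bound for the family of translates -/

section
open IsLocalRing

lemma map_annihilator_le {D S W : Type} [CommRing D] [CommRing S] [Algebra D S] [AddCommGroup W]
    [Module D W] : (Module.annihilator D W).map (algebraMap D S) ≤
      Module.annihilator S (S ⊗[D] W) := by
  rw [Ideal.map_le_iff_le_comap]
  intro a ha
  rw [Ideal.mem_comap, Module.mem_annihilator]
  intro t
  rw [algebraMap_smul]
  induction t using TensorProduct.induction_on with
  | zero => rw [smul_zero]
  | add u v hu hv => rw [smul_add, hu, hv, add_zero]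
  | tmul s w => rw [smul_tmul', smul_tmul, Module.mem_annihilator.1 ha, tmul_zero]

lemma annihilator_le_annihilator_tensorProduct {R S E Y : Type} [CommRing R] [CommRing S]
    [Algebra R S] [AddCommGroup E] [Module R E] [Module S E] [IsScalarTower R S E]
    [AddCommGroup Y] [Module R Y] :
    Module.annihilator S E ≤ Module.annihilator S (E ⊗[R] Y) := by
  intro a ha
  rw [Module.mem_annihilator]
  intro t
  induction t using TensorProduct.induction_on with
  | zero => rw [smul_zero]
  | add u v hu hv => rw [smul_add, hu, hv, add_zero]
  | tmul s w => rw [smul_tmul', Module.mem_annihilator.1 ha, zero_tmul]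

lemma ofList_le_annihilator_quotient {U V : Type} [CommRing U] [AddCommGroup V] [Module U V]
    (J : Ideal U) : J ≤ Module.annihilator U (V ⧸ (J • ⊤ : Submodule U V)) := by
  intro a ha
  rw [Module.mem_annihilator]
  intro t
  obtain ⟨v, rfl⟩ := Submodule.Quotient.mk_surjective _ t
  rw [← Submodule.Quotient.mk_smul, Submodule.Quotient.mk_eq_zero]
  exact Submodule.smul_mem_smul ha trivial

/-- The variant of `length_le_of_semilinear` for a map defined on `V` that factors through `V ⧸ p`. -/
lemma length_quot_le_of_semilinear {R S : Type} [CommRing R] [IsLocalRing R] [CommRing S]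
    (lam : R →+* S) (P : Ideal S) [P.IsMaximal] {V : Type} [AddCommGroup V] [Module R V]
    {p : Submodule R V} (h : IsFiniteLength R (V ⧸ p)) {Y : Type} [AddCommGroup Y] [Module S Y]
    (hP : P ≤ (maximalIdeal R).map lam ⊔ Module.annihilator S Y) (ψ : V →ₛₗ[lam] Y)
    (hp : p ≤ LinearMap.ker ψ) (hψ : Submodule.span S (Set.range ψ) = ⊤) :
    Module.length S Y ≤ Module.length R (V ⧸ p) := by
  refine length_le_of_semilinear lam P h hP (Submodule.liftQ p ψ hp) ?_
  rw [eq_top_iff, ← hψ]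
  refine Submodule.span_mono ?_
  rintro _ ⟨v, rfl⟩
  exact ⟨Submodule.Quotient.mk v, rfl⟩

section
variable {R : Type} [CommRing R] [IsLocalRing R] {d : ℕ} {M : Type} [AddCommGroup M] [Module R M]

lemma X_pow_mem_annihilator_thick (n : ℕ) (i : Fin d) :
    (MvPolynomial.X i : MvPolynomial (Fin d) R) ^ n ∈
      Module.annihilator (MvPolynomial (Fin d) R) (Thick R M d n) := by
  refine ofList_le_annihilator_quotient _ (Ideal.subset_span ?_)
  exact List.mem_map_of_mem (List.mem_ofFn.2 ⟨i, rfl⟩)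

lemma idealOfVars_pow_le_annihilator_thick {n : ℕ} (hn : n ≠ 0) :
    MvPolynomial.idealOfVars (Fin d) R ^ ((d + 1) * n) ≤
      Module.annihilator (MvPolynomial (Fin d) R) (Thick R M d n) := by
  have := ofList_pow_le (List.ofFn
      (fun i : Fin d => (MvPolynomial.X i : MvPolynomial (Fin d) R))) hn
  rw [ofList_ofFn, List.length_ofFn] at this
  exact this.trans (ofList_le_annihilator_quotient _)

lemma C_mem_annihilator_thick {n : ℕ} {a : R} (ha : a ∈ Module.annihilator R M) :
    MvPolynomial.C a ∈ Module.annihilator (MvPolynomial (Fin d) R) (Thick R M d n) := by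
  rw [Module.mem_annihilator]
  intro t
  obtain ⟨v, rfl⟩ := Submodule.Quotient.mk_surjective _ t
  have : (MvPolynomial.C a : MvPolynomial (Fin d) R) • v = 0 := by
    induction v using TensorProduct.induction_on with
    | zero => rw [smul_zero]
    | add u v hu hv =>
      rw [smul_add, hu, hv, add_zero]
    | tmul f m =>
      rw [smul_tmul', smul_eq_mul, ← MvPolynomial.smul_eq_C_mul, smul_tmul,
        Module.mem_annihilator.1 ha, tmul_zero]
  rw [← Submodule.Quotient.mk_smul, this, Submodule.Quotient.mk_zero]

variable {S : Type} [CommRing S] [Algebra (MvPolynomial (Fin d) R) S]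
    [Algebra R S] [SMulCommClass (MvPolynomial (Fin d) R) R S]

/-- Elements annihilating `M` act nilpotently, through the second structure, on `S ⊗ Thick M`. -/
lemma algebraMap_pow_mem_annihilator
    (hτ : ∀ r : R, algebraMap R S r - algebraMap (MvPolynomial (Fin d) R) S (MvPolynomial.C r) ∈
        (MvPolynomial.idealOfVars (Fin d) R).map (algebraMap _ S))
    {n : ℕ} (hn : n ≠ 0) {a : R} (ha : a ∈ Module.annihilator R M) :
    algebraMap R S a ^ ((d + 1) * n) ∈
      Module.annihilator S (S ⊗[MvPolynomial (Fin d) R] Thick R M d n) := by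
  refine map_annihilator_le ?_
  set Q := (Module.annihilator (MvPolynomial (Fin d) R) (Thick R M d n)).map
    (algebraMap (MvPolynomial (Fin d) R) S)
  set δ := algebraMap R S a - algebraMap (MvPolynomial (Fin d) R) S (MvPolynomial.C a) with hδ
  have h1 : δ ^ ((d + 1) * n) ∈ Q := by
    have := Ideal.pow_mem_pow (hτ a) ((d + 1) * n)
    rw [← Ideal.map_pow] at this
    exact Ideal.map_mono (idealOfVars_pow_le_annihilator_thick hn) this
  have h2 : algebraMap R S a ^ ((d + 1) * n) - δ ^ ((d + 1) * n) ∈ Q := by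
    refine Ideal.mem_of_dvd _ (sub_dvd_pow_sub_pow _ _ _) ?_
    rw [hδ, sub_sub_cancel]
    exact Ideal.mem_map_of_mem _ (C_mem_annihilator_thick ha)
  have := add_mem h2 h1
  rwa [sub_add_cancel] at this

set_option maxHeartbeats 4000000 in
/-- The upper bound for the family of translates when `N` is the residue field. After tensoring
with `k` along `τ`, each `xᵢ + εᵢ` acts as zero, so the constants `xᵢ` inherit `xᵢⁿ = 0` from `εᵢ`,
and the image of `M`, on which `R` acts through constants, generates. -/
lemma length_thick_residue_le (x : Fin d → R) (hxm : Ideal.span (Set.range x) = maximalIdeal R)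
    (hx : ∀ i, algebraMap R S (x i) = algebraMap (MvPolynomial (Fin d) R) S
      (MvPolynomial.C (x i) + MvPolynomial.X i))
    (hmax : ((bigIdeal R d).map (algebraMap (MvPolynomial (Fin d) R) S)).IsMaximal) (n : ℕ)
    (hfin : IsFiniteLength R
      (M ⧸ (Ideal.ofList ((List.ofFn x).map (· ^ n)) • ⊤ : Submodule R M))) :
    Module.length S ((S ⊗[MvPolynomial (Fin d) R] Thick R M d n) ⊗[R] (R ⧸ maximalIdeal R)) ≤
      Module.length R (M ⧸ (Ideal.ofList ((List.ofFn x).map (· ^ n)) • ⊤ : Submodule R M)) := by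
  -- `lam` is the structure through constants, as opposed to the translated `algebraMap R S`
  let lam : R →+* S := (algebraMap (MvPolynomial (Fin d) R) S).comp MvPolynomial.C
  let E := S ⊗[MvPolynomial (Fin d) R] Thick R M d n
  let Y := E ⊗[R] (R ⧸ maximalIdeal R)
  have hτY : ∀ r ∈ maximalIdeal R, algebraMap R S r ∈ Module.annihilator S Y := by
    intro r hr
    rw [Module.mem_annihilator]
    intro t
    induction t using TensorProduct.induction_on with
    | zero => rw [smul_zero]
    | add u v hu hv => rw [smul_add, hu, hv, add_zero]
    | tmul e y =>
      obtain ⟨y, rfl⟩ := Ideal.Quotient.mk_surjective y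
      rw [algebraMap_smul, smul_tmul', smul_tmul, Algebra.smul_def, Ideal.Quotient.algebraMap_eq,
        ← map_mul, Ideal.Quotient.eq_zero_iff_mem.2 (Ideal.mul_mem_right _ _ hr), tmul_zero]
  have hxi : ∀ i, x i ∈ maximalIdeal R := fun i => hxm ▸ Ideal.subset_span ⟨i, rfl⟩
  have hlam : ∀ i, lam (x i) ^ n ∈ Module.annihilator S Y := by
    intro i
    have h1 : (-(algebraMap (MvPolynomial (Fin d) R) S (MvPolynomial.X i))) ^ n ∈
        Module.annihilator S Y := by
      rw [neg_pow]
      refine Ideal.mul_mem_left _ _ (annihilator_le_annihilator_tensorProduct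
        (map_annihilator_le ?_))
      rw [← map_pow]
      exact Ideal.mem_map_of_mem _ (X_pow_mem_annihilator_thick n i)
    have h2 : lam (x i) ^ n - (-(algebraMap (MvPolynomial (Fin d) R) S (MvPolynomial.X i))) ^ n ∈
        Module.annihilator S Y := by
      refine Ideal.mem_of_dvd _ (sub_dvd_pow_sub_pow _ _ _) ?_
      have := hτY _ (hxi i)
      rw [hx, map_add] at this
      rwa [sub_neg_eq_add]
    have := add_mem h2 h1
    rwa [sub_add_cancel] at this
  let ψ₀ : M →ₛₗ[lam] Y :=
    { toFun := fun m => ((1 : S) ⊗ₜ (Submodule.Quotient.mk (1 ⊗ₜ m) : Thick R M d n)) ⊗ₜ 1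
      map_add' := fun a b => by
        rw [tmul_add, Submodule.Quotient.mk_add, tmul_add, add_tmul]
      map_smul' := fun r a => by
        have : (1 : MvPolynomial (Fin d) R) ⊗ₜ[R] (r • a) =
            (MvPolynomial.C r : MvPolynomial (Fin d) R) • (1 ⊗ₜ[R] a) := by
          rw [← smul_tmul, smul_tmul', smul_eq_mul, MvPolynomial.smul_eq_C_mul]
        rw [this, Submodule.Quotient.mk_smul, ← smul_tmul, smul_tmul', smul_tmul',
          Algebra.smul_def]
        rfl }
  have hψ₀ : (Ideal.ofList ((List.ofFn x).map (· ^ n)) • ⊤ : Submodule R M) ≤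
      LinearMap.ker ψ₀ := by
    refine span_smul_top_induction (zero_mem _) (fun _ _ => add_mem) ?_
    intro r hr v
    obtain ⟨_, hx, rfl⟩ := List.mem_map.1 hr
    obtain ⟨i, rfl⟩ := List.mem_ofFn.1 hx
    rw [LinearMap.mem_ker, map_smulₛₗ, map_pow]
    exact Module.mem_annihilator.1 (hlam i) _
  have := hmax
  refine length_quot_le_of_semilinear lam
    ((bigIdeal R d).map (algebraMap (MvPolynomial (Fin d) R) S)) hfin (Y := Y) ?_ ψ₀ hψ₀ ?_
  · rw [bigIdeal, Ideal.map_sup, Ideal.map_map]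
    refine sup_le le_sup_left ?_
    rw [MvPolynomial.idealOfVars, Ideal.map_span, Ideal.span_le]
    rintro _ ⟨_, ⟨i, rfl⟩, rfl⟩
    have h1 : algebraMap (MvPolynomial (Fin d) R) S (MvPolynomial.X i) =
        -lam (x i) + algebraMap R S (x i) := by
      rw [hx, map_add]; simp [lam]
    rw [h1]
    exact add_mem (Submodule.mem_sup_left (neg_mem (Ideal.mem_map_of_mem _ (hxi i))))
      (Submodule.mem_sup_right (hτY _ (hxi i)))
  · rw [eq_top_iff]
    rintro t -
    set L := Submodule.span S (Set.range ψ₀)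
    have key : ∀ m : M, ψ₀ m ∈ L := fun m => Submodule.subset_span ⟨m, rfl⟩
    induction t using TensorProduct.induction_on with
    | zero => exact zero_mem _
    | add u v hu hv => exact add_mem hu hv
    | tmul e y =>
      obtain ⟨r, rfl⟩ := Ideal.Quotient.mk_surjective y
      have h1 : (Ideal.Quotient.mk (maximalIdeal R) r) = r • 1 := by
        rw [Algebra.smul_def, mul_one]; rfl
      rw [h1, ← smul_tmul, ← smul_tmul', ← algebraMap_smul S r]
      refine L.smul_mem _ ?_
      induction e using TensorProduct.induction_on with
      | zero => rw [zero_tmul]; exact zero_mem _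
      | add u v hu hv => rw [add_tmul]; exact add_mem hu hv
      | tmul s w =>
        obtain ⟨v, rfl⟩ := Submodule.Quotient.mk_surjective _ w
        induction v using TensorProduct.induction_on with
        | zero => rw [Submodule.Quotient.mk_zero, tmul_zero, zero_tmul]; exact zero_mem _
        | add u v hu hv =>
          rw [Submodule.Quotient.mk_add, tmul_add, add_tmul]; exact add_mem hu hv
        | tmul f m =>
          have h2 : f ⊗ₜ[R] m = f • ((1 : MvPolynomial (Fin d) R) ⊗ₜ[R] m) := by
            rw [smul_tmul', smul_eq_mul, mul_one]
          have h3 : (f • s) = (f • s) • (1 : S) := by rw [smul_eq_mul, mul_one]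
          rw [h2, Submodule.Quotient.mk_smul, ← smul_tmul, h3, ← smul_tmul', ← smul_tmul']
          exact L.smul_mem _ (key m)
end

end

/-! ### The inequality `dim R ≤ dim M + dim N` -/

section
open IsLocalRing

/-- If the members of `J` act as zero on `E ⊗ N`, nothing is lost by replacing `N` with its
quotient by them. -/
lemma length_tensorProduct_le_quot {R S : Type} [CommRing R] [CommRing S] [Algebra R S]
    {E : Type} [AddCommGroup E] [Module R E] [Module S E] [IsScalarTower R S E]
    {N : Type} [AddCommGroup N] [Module R N] (J : List R)
    (hJ : ∀ r ∈ J, algebraMap R S r ∈ Module.annihilator S (E ⊗[R] N)) :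
    Module.length S (E ⊗[R] N) ≤
      Module.length S (E ⊗[R] (N ⧸ (Ideal.ofList J • ⊤ : Submodule R N))) := by
  refine Module.length_le_of_injective
    (TensorProduct.AlgebraTensorModule.lTensor S E (Ideal.ofList J • ⊤ : Submodule R N).mkQ) ?_
  rw [injective_iff_map_eq_zero]
  intro t ht
  obtain ⟨u, rfl⟩ := (lTensor_exact E
    (LinearMap.exact_subtype_mkQ (Ideal.ofList J • ⊤ : Submodule R N))
    (Submodule.mkQ_surjective _) t).1 ht
  clear ht
  induction u using TensorProduct.induction_on with
  | zero => rw [map_zero]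
  | add u v hu hv => rw [map_add, hu, hv, add_zero]
  | tmul e w =>
    obtain ⟨w, hw⟩ := w
    rw [LinearMap.lTensor_tmul, Submodule.subtype_apply]
    change e ⊗ₜ[R] w = 0
    refine span_smul_top_induction (p := fun w => e ⊗ₜ[R] w = 0) (tmul_zero _ _)
      (fun v w hv hw => by rw [tmul_add, hv, hw, add_zero]) (fun r hr v => ?_) w hw
    have := Module.mem_annihilator.1 (hJ r hr) (e ⊗ₜ v)
    rwa [algebraMap_smul, ← tmul_smul] at this

/-- If `ann M` acts nilpotently of order `K` on `E`, then so does `ann M + ann N` on `E ⊗ N`. -/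
lemma algebraMap_pow_mem_annihilator_tensorProduct {R S : Type} [CommRing R] [CommRing S]
    [Algebra R S] {E : Type} [AddCommGroup E] [Module R E] [Module S E] [IsScalarTower R S E]
    {M N : Type} [AddCommGroup M] [Module R M] [AddCommGroup N] [Module R N] {K : ℕ}
    (hE : ∀ a ∈ Module.annihilator R M, algebraMap R S a ^ K ∈ Module.annihilator S E)
    {a : R} (ha : a ∈ Module.annihilator R M ⊔ Module.annihilator R N) :
    algebraMap R S a ^ K ∈ Module.annihilator S (E ⊗[R] N) := by
  obtain ⟨u, hu, v, hv, rfl⟩ := Submodule.mem_sup.1 ha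
  have h1 : algebraMap R S v ∈ Module.annihilator S (E ⊗[R] N) := by
    rw [Module.mem_annihilator]
    intro t
    induction t using TensorProduct.induction_on with
    | zero => rw [smul_zero]
    | add u v hu hv => rw [smul_add, hu, hv, add_zero]
    | tmul e w => rw [algebraMap_smul, ← tmul_smul, Module.mem_annihilator.1 hv, tmul_zero]
  have h2 : algebraMap R S (u + v) ^ K - algebraMap R S u ^ K ∈
      Module.annihilator S (E ⊗[R] N) := by
    refine Ideal.mem_of_dvd _ (sub_dvd_pow_sub_pow _ _ _) ?_
    rwa [map_add, add_sub_cancel_left]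
  have := add_mem h2 (annihilator_le_annihilator_tensorProduct (hE u hu))
  rwa [sub_add_cancel] at this

section
variable {R : Type} [CommRing R] [IsLocalRing R]

lemma isFiniteLength_quot_pow {V : Type} [AddCommGroup V] [Module R V] (rs : List R) (n : ℕ)
    (h : IsFiniteLength R (V ⧸ (Ideal.ofList rs • ⊤ : Submodule R V))) :
    IsFiniteLength R (V ⧸ (Ideal.ofList (rs.map (· ^ n)) • ⊤ : Submodule R V)) := by
  rw [← Module.length_ne_top_iff] at h ⊢
  exact ne_top_of_le_ne_top (WithTop.mul_ne_top (ENat.natCast_ne_top _) h)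
    (length_quot_ofList_pow_le R rs n)

/-- The growth estimate behind `dim R ≤ dim M + dim N`. Regularity of `ys` and `zs` is not needed:
it is enough that they cut `M` and `N` down to finite length. -/
lemma exists_pow_le_mul_pow_add [IsNoetherianRing R] {d : ℕ}
    (hfield : ∃ (K : Type) (_ : Field K), Nonempty (K →+* R)) (x : Fin d → R)
    (hx : Ideal.span (Set.range x) = maximalIdeal R)
    (hreg : RingTheory.Sequence.IsWeaklyRegular R (List.ofFn x))
    (M N : Type) [AddCommGroup M] [Module R M] [AddCommGroup N] [Module R N]
    [Module.Finite R M] [Module.Finite R N] [Nontrivial M] [Nontrivial N]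
    (hlen : IsFiniteLength R (M ⊗[R] N))
    (htor : Subsingleton
      (((Tor (ModuleCat R) 1).obj (ModuleCat.of R M)).obj (ModuleCat.of R N)))
    (ys zs : List R) (hys : ∀ y ∈ ys, y ∈ maximalIdeal R) (hzs : ∀ z ∈ zs, z ∈ maximalIdeal R)
    (hM : IsFiniteLength R (M ⧸ (Ideal.ofList ys • ⊤ : Submodule R M)))
    (hN : IsFiniteLength R (N ⧸ (Ideal.ofList zs • ⊤ : Submodule R N))) :
    ∃ C : ℕ, ∀ n, n ≠ 0 → n ^ d ≤ C * n ^ (ys.length + zs.length) := by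
  obtain ⟨S, _, _, τ, hflat, hτx, hτ, hmax⟩ := exists_translation hfield x hx hreg
  let _ : Algebra R S := τ.toAlgebra
  have _ : SMulCommClass (MvPolynomial (Fin d) R) R S := ⟨fun a r s => by
    rw [Algebra.smul_def, Algebra.smul_def, Algebra.smul_def, Algebra.smul_def, mul_left_comm]⟩
  obtain ⟨N', F, _, _, _, _, j, p, _, hjp, hp, hj⟩ := exists_presentation_of_tor M N htor
  have _ : Nontrivial (M ⊗[R] N) := nontrivial_tensorProduct_of_isLocalRing
  obtain ⟨c, hc⟩ := exists_pow_le_annihilator_sup hlen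
  obtain ⟨lM, hlM⟩ := ENat.ne_top_iff_exists.1 (Module.length_ne_top_iff.2 hM)
  obtain ⟨lN, hlN⟩ := ENat.ne_top_iff_exists.1 (Module.length_ne_top_iff.2 hN)
  refine ⟨(c * (d + 1)) ^ zs.length * lN * ((d + 1) ^ ys.length * lM), fun n hn => ?_⟩
  obtain ⟨n, rfl⟩ := Nat.exists_eq_succ_of_ne_zero hn
  have h1 := pow_le_length_thick (M := M) hτ hmax.ne_top j p hjp hp hj n
  -- replace `N` by its quotient by powers of `zs`, with exponent linear in `n`
  set K := (d + 1) * (n + 1)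
  have h2 := length_tensorProduct_le_quot (S := S)
    (E := S ⊗[MvPolynomial (Fin d) R] Thick R M d (n + 1)) (N := N) (zs.map (· ^ (c * K)))
    (fun r hr => by
      obtain ⟨z, hz, rfl⟩ := List.mem_map.1 hr
      rw [pow_mul, map_pow]
      exact algebraMap_pow_mem_annihilator_tensorProduct
        (fun a ha => algebraMap_pow_mem_annihilator hτ hn ha)
        (hc (Ideal.pow_mem_pow (hzs z hz) c)))
  have hNf := isFiniteLength_quot_pow zs (c * K) hN
  have h3 := length_tensorProduct_le (S := S)
    (E := S ⊗[MvPolynomial (Fin d) R] Thick R M d (n + 1)) hNf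
  -- large powers of `ys` lie in the ideal of `n`-th powers of the parameters
  have hle : Ideal.ofList (ys.map (· ^ K)) ≤ Ideal.ofList ((List.ofFn x).map (· ^ (n + 1))) := by
    refine Ideal.span_le.2 fun r hr => ?_
    obtain ⟨y, hy, rfl⟩ := List.mem_map.1 hr
    have := ofList_pow_le (List.ofFn x) hn
    rw [List.length_ofFn] at this
    refine this (Ideal.pow_mem_pow ?_ _)
    rw [ofList_ofFn, hx]
    exact hys y hy
  let q : (M ⧸ (Ideal.ofList (ys.map (· ^ K)) • ⊤ : Submodule R M)) →ₗ[R]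
      (M ⧸ (Ideal.ofList ((List.ofFn x).map (· ^ (n + 1))) • ⊤ : Submodule R M)) :=
    Submodule.factor (Submodule.smul_mono_left hle)
  have hq : Function.Surjective q := Submodule.factor_surjective _
  have hMf := (isFiniteLength_quot_pow ys K hM).of_surjective hq
  have h4 := length_thick_residue_le (S := S) x hx hτx hmax (n + 1) hMf
  have h5 := Module.length_le_of_surjective q hq
  have h6 := length_quot_ofList_pow_le R ys K (V := M)
  have h7 := length_quot_ofList_pow_le R zs (c * K) (V := N)
  rw [← hlM] at h6
  rw [← hlN] at h7
  have h8 := (h1.trans h2).trans (h3.trans (mul_le_mul' h7 (h4.trans (h5.trans h6))))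
  rw [← Nat.cast_mul, ← Nat.cast_mul, ← Nat.cast_mul, Nat.cast_le] at h8
  refine h8.trans (le_of_eq ?_)
  simp only [K, Nat.succ_eq_add_one]
  rw [← mul_assoc c, mul_pow (c * (d + 1)), mul_pow (d + 1), pow_add]
  ring
end

end

/-! ### Reduction to the diagonal -/

section
open IsLocalRing

/-- Lengths over a local algebra with coefficient field `k` can be counted over `k`. -/
lemma length_coefficientField_le {k B : Type} [Field k] [CommRing B] [IsLocalRing B] [Algebra k B]
    (hk : ∀ b : B, ∃ c : k, b - algebraMap k B c ∈ maximalIdeal B) {V : Type} [AddCommGroup V]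
    [Module B V] (h : IsFiniteLength B V) :
    ∀ [Module k V] [IsScalarTower k B V], Module.length k V ≤ Module.length B V := by
  induction h with
  | of_subsingleton => intro _ _; rw [Module.length_eq_zero]; exact zero_le
  | @of_simple_quotient V _ _ V' hs _ ih =>
    intro _ _
    have hs' := hs
    let f : V' →ₗ[k] V := V'.subtype.restrictScalars k
    let g : V →ₗ[k] V ⧸ V' := V'.mkQ.restrictScalars k
    rw [Module.length_eq_add_of_exact V'.subtype V'.mkQ (Submodule.subtype_injective _)
        (Submodule.mkQ_surjective _) (LinearMap.exact_subtype_mkQ V'),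
      Module.length_eq_add_of_exact f g (Submodule.subtype_injective _)
        (Submodule.mkQ_surjective _) (LinearMap.exact_subtype_mkQ V'),
      Module.length_eq_one B (V ⧸ V')]
    refine add_le_add ih ?_
    obtain ⟨v, hv⟩ := @exists_ne (V ⧸ V') (IsSimpleModule.nontrivial B _) 0
    rw [← Module.length_eq_one k k]
    refine Module.length_le_of_surjective (LinearMap.toSpanSingleton k (V ⧸ V') v) fun w => ?_
    obtain ⟨b, rfl⟩ := IsSimpleModule.toSpanSingleton_surjective B hv w
    obtain ⟨c, hc⟩ := hk b
    refine ⟨c, ?_⟩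
    obtain ⟨v, rfl⟩ := Submodule.Quotient.mk_surjective _ v
    rw [LinearMap.toSpanSingleton_apply, LinearMap.toSpanSingleton_apply, eq_comm, ← sub_eq_zero,
      ← algebraMap_smul B c, ← sub_smul, ← Submodule.Quotient.mk_smul,
      Submodule.Quotient.mk_eq_zero]
    exact maximalIdeal_smul_mem_of_isSimpleModule V' hc v

/-- Reduction to the diagonal: `M ⊗[B] N` is the quotient of `M ⊗[k] N` by the `d` operators
`xᵢ ⊗ 1 - 1 ⊗ xᵢ`, each of which is nilpotent of order at most `2 * e`. -/
lemma length_tensorProduct_le_pow_mul {k B : Type} [Field k] [CommRing B] [Algebra k B] {d : ℕ}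
    (x : Fin d → B)
    (hx : Function.Surjective (MvPolynomial.aeval x : MvPolynomial (Fin d) k →ₐ[k] B))
    {e : ℕ} (he : ∀ i, x i ^ e = 0) (M N : Type) [AddCommGroup M] [Module B M] [Module k M]
    [IsScalarTower k B M] [AddCommGroup N] [Module B N] [Module k N] [IsScalarTower k B N] :
    Module.length k (M ⊗[k] N) ≤ ((2 * e) ^ d : ℕ) * Module.length k (M ⊗[B] N) := by
  let φ : B ⊗[k] B →ₐ[k] Module.End k (M ⊗[k] N) :=
    (Module.endTensorEndAlgHom (R := k) (S := k) (A := k) (M := M) (N := N)).comp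
      (Algebra.TensorProduct.map (Algebra.lsmul k k M) (Algebra.lsmul k k N))
  let _ : Module (B ⊗[k] B) (M ⊗[k] N) := Module.compHom _ φ.toRingHom
  have hφ : ∀ (b c : B) (m : M) (n : N), (b ⊗ₜ[k] c) • (m ⊗ₜ[k] n) = (b • m) ⊗ₜ (c • n) :=
    fun b c m n => rfl
  have _ : IsScalarTower k (B ⊗[k] B) (M ⊗[k] N) := ⟨fun c u t => by
    change φ (c • u) t = c • φ u t
    rw [map_smul]; rfl⟩
  let f : Fin d → B ⊗[k] B := fun i => x i ⊗ₜ 1 - 1 ⊗ₜ x i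
  have hf : ∀ i, f i ^ (2 * e) = 0 := by
    intro i
    have h1 : (x i ⊗ₜ[k] (1 : B)) ^ e = 0 := by
      rw [Algebra.TensorProduct.tmul_pow, he, zero_tmul]
    have h2 : ((1 : B) ⊗ₜ[k] x i) ^ e = 0 := by
      rw [Algebra.TensorProduct.tmul_pow, he, tmul_zero]
    change (x i ⊗ₜ[k] (1 : B) - (1 : B) ⊗ₜ[k] x i) ^ (2 * e) = 0
    rw [sub_eq_add_neg]
    refine (Commute.all _ _).add_pow_eq_zero_of_add_le_succ_of_pow_eq_zero h1
      (n := e) ?_ (by omega)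
    rw [neg_pow, h2, mul_zero]
  have h1 := length_quot_ofList_pow_le k (List.ofFn f) (2 * e) (V := M ⊗[k] N)
  have hbot : (Ideal.ofList ((List.ofFn f).map (· ^ (2 * e))) • ⊤ :
      Submodule (B ⊗[k] B) (M ⊗[k] N)) = ⊥ := by
    have : Ideal.ofList ((List.ofFn f).map (· ^ (2 * e))) = ⊥ := by
      rw [eq_bot_iff, Ideal.ofList, Ideal.span_le]
      intro r hr
      obtain ⟨_, hy, rfl⟩ := List.mem_map.1 hr
      obtain ⟨i, rfl⟩ := List.mem_ofFn.1 hy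
      exact hf i
    rw [this, Submodule.bot_smul]
  rw [List.length_ofFn] at h1
  have h2 : Module.length k (M ⊗[k] N) ≤ Module.length k ((M ⊗[k] N) ⧸
      (Ideal.ofList ((List.ofFn f).map (· ^ (2 * e))) • ⊤ :
      Submodule (B ⊗[k] B) (M ⊗[k] N))) := by
    refine Module.length_le_of_injective
      ((Submodule.mkQ (Ideal.ofList ((List.ofFn f).map (· ^ (2 * e))) • ⊤ :
      Submodule (B ⊗[k] B) (M ⊗[k] N))).restrictScalars k) ?_
    rw [hbot]
    intro a b hab
    have := (Submodule.Quotient.eq _).1 hab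
    rwa [Submodule.mem_bot, sub_eq_zero] at this
  refine h2.trans (h1.trans (mul_le_mul_right ?_ _))
  -- the diagonal ideal contains all `b ⊗ 1 - 1 ⊗ b`
  have hdiag : ∀ b : B, b ⊗ₜ[k] (1 : B) - (1 : B) ⊗ₜ[k] b ∈ Ideal.ofList (List.ofFn f) := by
    let π := Ideal.Quotient.mkₐ k (Ideal.ofList (List.ofFn f))
    have : (π.comp Algebra.TensorProduct.includeLeft).comp (MvPolynomial.aeval x) =
        (π.comp Algebra.TensorProduct.includeRight).comp
          (MvPolynomial.aeval x : MvPolynomial (Fin d) k →ₐ[k] B) := by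
      refine MvPolynomial.algHom_ext fun i => ?_
      simp only [AlgHom.comp_apply, MvPolynomial.aeval_X,
        Algebra.TensorProduct.includeLeft_apply, Algebra.TensorProduct.includeRight_apply]
      exact (Ideal.Quotient.eq).2 (Ideal.subset_span (List.mem_ofFn.2 ⟨i, rfl⟩))
    intro b
    obtain ⟨a, rfl⟩ := hx b
    exact (Ideal.Quotient.eq).1 (DFunLike.congr_fun this a)
  set W := (Ideal.ofList (List.ofFn f) • ⊤ : Submodule (B ⊗[k] B) (M ⊗[k] N))
  let Ψ : M ⊗[B] N →+ (M ⊗[k] N) ⧸ W := TensorProduct.liftAddHom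
    (AddMonoidHom.mk' (fun m => AddMonoidHom.mk' (fun n => Submodule.Quotient.mk (m ⊗ₜ[k] n))
      fun n n' => by rw [tmul_add, Submodule.Quotient.mk_add])
      fun m m' => by
        ext n
        simp only [AddMonoidHom.mk'_apply, AddMonoidHom.add_apply]
        rw [add_tmul, Submodule.Quotient.mk_add])
    (fun b m n => by
      simp only [AddMonoidHom.mk'_apply]
      rw [Submodule.Quotient.eq]
      have := Submodule.smul_mem_smul (hdiag b) (Submodule.mem_top (x := m ⊗ₜ[k] n))
      rwa [sub_smul, hφ, hφ, one_smul, one_smul] at this)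
  have hΨ : ∀ m n, Ψ (m ⊗ₜ n) = Submodule.Quotient.mk (m ⊗ₜ[k] n) := fun _ _ => rfl
  let Ψ' : M ⊗[B] N →ₗ[k] (M ⊗[k] N) ⧸ W :=
    { toFun := Ψ
      map_add' := map_add Ψ
      map_smul' := fun c t => by
        induction t using TensorProduct.induction_on with
        | zero => rw [smul_zero, map_zero, smul_zero]
        | add u v hu hv => rw [smul_add, map_add, map_add, hu, hv, smul_add]
        | tmul m n => rw [smul_tmul', hΨ, hΨ, ← smul_tmul']; rfl }
  refine Module.length_le_of_surjective Ψ' fun t => ?_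
  obtain ⟨t, rfl⟩ := Submodule.Quotient.mk_surjective _ t
  induction t using TensorProduct.induction_on with
  | zero => exact ⟨0, map_zero _⟩
  | add u v hu hv =>
    obtain ⟨u', hu⟩ := hu
    obtain ⟨v', hv⟩ := hv
    exact ⟨u' + v', by rw [map_add, hu, hv, Submodule.Quotient.mk_add]⟩
  | tmul m n => exact ⟨m ⊗ₜ n, rfl⟩

end

/-! ### The inequality `dim M + dim N ≤ dim R` -/

section
open IsLocalRing

section
variable {R : Type} [CommRing R] [IsLocalRing R]

/-- A Bézout-type inequality for modules killed by `m ^ a`. Lengths over `R ⧸ m ^ a` are dimensions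
over a coefficient field, where they are multiplicative, and the reduction to the diagonal compares
the tensor product over the field with the one over `R`. -/
lemma length_mul_length_le [IsNoetherianRing R] {d : ℕ}
    (hfield : ∃ (K : Type) (_ : Field K), Nonempty (K →+* R)) (x : Fin d → R)
    (hx : Ideal.span (Set.range x) = maximalIdeal R) {a : ℕ} (ha : a ≠ 0)
    {V W : Type} [AddCommGroup V] [Module R V] [AddCommGroup W] [Module R W]
    (hV : IsFiniteLength R V) (hW : IsFiniteLength R W)
    (hVW : IsFiniteLength R (V ⊗[R] W))
    (hVa : maximalIdeal R ^ a ≤ Module.annihilator R V)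
    (hWa : maximalIdeal R ^ a ≤ Module.annihilator R W) :
    Module.length R V * Module.length R W ≤
      ((2 * a) ^ d : ℕ) * Module.length R (V ⊗[R] W) := by
  obtain ⟨σ, hσ1, hσ2⟩ := exists_coefficientField R hfield
  have hσ : IsCoefficientSystem σ := ⟨hσ1, hσ2⟩
  let k := ResidueField R
  let B := R ⧸ maximalIdeal R ^ a
  have hne : maximalIdeal R ^ a ≠ ⊤ := fun h =>
    (maximalIdeal.isMaximal R).ne_top (top_le_iff.1 (h ▸ Ideal.pow_le_self ha))
  have _ : Nontrivial B := Ideal.Quotient.nontrivial_iff.2 hne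
  have _ : IsLocalRing B := IsLocalRing.of_surjective' (Ideal.Quotient.mk _)
    Ideal.Quotient.mk_surjective
  let _ : Algebra k B := (σ a).toAlgebra
  let _ : Module B V := Module.IsTorsionBySet.module (I := maximalIdeal R ^ a)
    (fun v r => Module.mem_annihilator.1 (hVa r.2) v)
  let _ : Module B W := Module.IsTorsionBySet.module (I := maximalIdeal R ^ a)
    (fun v r => Module.mem_annihilator.1 (hWa r.2) v)
  have _ : IsScalarTower R B V := ⟨fun r b v => by
    obtain ⟨b, rfl⟩ := Ideal.Quotient.mk_surjective b
    change (r * b) • v = r • (b • v)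
    rw [mul_smul]⟩
  have _ : IsScalarTower R B W := ⟨fun r b v => by
    obtain ⟨b, rfl⟩ := Ideal.Quotient.mk_surjective b
    change (r * b) • v = r • (b • v)
    rw [mul_smul]⟩
  let _ : Module k V := Module.compHom V (σ a)
  let _ : Module k W := Module.compHom W (σ a)
  have _ : IsScalarTower k B V := ⟨fun c b v => by
    rw [Algebra.smul_def, mul_smul]; rfl⟩
  have _ : IsScalarTower k B W := ⟨fun c b v => by
    rw [Algebra.smul_def, mul_smul]; rfl⟩
  have hmem : ∀ r ∈ maximalIdeal R, (Ideal.Quotient.mk (maximalIdeal R ^ a) r) ^ a = 0 := by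
    intro r hr
    rw [← map_pow]
    exact Ideal.Quotient.eq_zero_iff_mem.2 (Ideal.pow_mem_pow hr a)
  have hk : ∀ b : B, ∃ c : k, b - algebraMap k B c ∈ maximalIdeal B := by
    intro b
    obtain ⟨r, rfl⟩ := Ideal.Quotient.mk_surjective b
    obtain ⟨r', hr'⟩ := Ideal.Quotient.mk_surjective (σ a (residue R r))
    refine ⟨residue R r, ?_⟩
    have h := hσ2 a ha _ _ hr'.symm
    change Ideal.Quotient.mk _ r - σ a (residue R r) ∈ _
    rw [← hr', ← map_sub, mem_maximalIdeal, mem_nonunits_iff]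
    intro hu
    have := hmem (r - r') (by rw [← residue_eq_zero_iff, map_sub, h, sub_self])
    exact not_isUnit_zero (this ▸ hu.pow a)
  have hsurj : Function.Surjective (algebraMap R B) := Ideal.Quotient.mk_surjective
  have hlV := Module.length_eq_of_surjective (R := B) (S := R) (M := V) hsurj
  have hlW := Module.length_eq_of_surjective (R := B) (S := R) (M := W) hsurj
  have hVB : IsFiniteLength B V := by
    rw [← Module.length_ne_top_iff, ← hlV, Module.length_ne_top_iff]; exact hV
  have hWB : IsFiniteLength B W := by
    rw [← Module.length_ne_top_iff, ← hlW, Module.length_ne_top_iff]; exact hW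
  have fin : ∀ (U : Type) [AddCommGroup U] [Module B U] [Module k U] [IsScalarTower k B U],
      IsFiniteLength B U → Module.Finite k U := by
    intro U _ _ _ _ hU
    have := Module.length_ne_top_iff.1
      (ne_top_of_le_ne_top (Module.length_ne_top_iff.2 hU) (length_coefficientField_le hk hU))
    have := (isFiniteLength_iff_isNoetherian_isArtinian.1 this).1
    infer_instance
  have _ := fin V hVB
  have _ := fin W hWB
  have le : ∀ (U : Type) [AddCommGroup U] [Module B U] [Module k U] [IsScalarTower k B U],
      Module.length B U ≤ Module.length k U := by
    intro U _ _ _ _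
    have := Submodule.length_le_length_restrictScalars (R := B) (M := U) k ⊤
    rwa [Module.length_top, Submodule.restrictScalars_top, Module.length_top] at this
  have h1 := length_tensorProduct_le_pow_mul (k := k) (B := B) (fun i => Ideal.Quotient.mk _ (x i))
    (pMap_surjective hσ x hx a) (e := a)
    (fun i => hmem _ (hx ▸ Ideal.subset_span ⟨i, rfl⟩)) V W
  have h2 : Module.length k V * Module.length k W = Module.length k (V ⊗[k] W) := by
    rw [Module.length_eq_finrank, Module.length_eq_finrank, Module.length_eq_finrank,
      Module.finrank_tensorProduct, Nat.cast_mul]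
  have hq : Function.Surjective (TensorProduct.mapOfCompatibleSMul B R R V W) :=
    TensorProduct.mapOfCompatibleSMul_surjective _ _ _ _ _
  have hlVW := Module.length_eq_of_surjective (R := B) (S := R) (M := V ⊗[B] W) hsurj
  have hVWB : IsFiniteLength B (V ⊗[B] W) := by
    rw [← Module.length_ne_top_iff, ← hlVW, Module.length_ne_top_iff]
    exact hVW.of_surjective hq
  rw [hlV, hlW]
  refine (mul_le_mul' (le V) (le W)).trans (h2.le.trans (h1.trans (mul_le_mul_right ?_ _)))
  refine (length_coefficientField_le hk hVWB).trans ?_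
  rw [← hlVW]
  exact Module.length_le_of_surjective _ hq

lemma pow_le_annihilator_quot_pow {V : Type} [AddCommGroup V] [Module R V] {I J : Ideal R} {c : ℕ}
    (h : I ^ c ≤ Module.annihilator R (V ⧸ (J • ⊤ : Submodule R V))) (k : ℕ) :
    I ^ (c * k) ≤ Module.annihilator R (V ⧸ (J ^ k • ⊤ : Submodule R V)) := by
  have key : ∀ (A B : Ideal R), A ≤ Module.annihilator R (V ⧸ (B • ⊤ : Submodule R V)) ↔
      (A • ⊤ : Submodule R V) ≤ B • ⊤ := by
    intro A B
    rw [Submodule.smul_le]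
    refine forall₂_congr fun a _ => ?_
    rw [Module.mem_annihilator, (Submodule.Quotient.mk_surjective _).forall]
    refine forall_congr' fun v => ?_
    rw [← Submodule.Quotient.mk_smul, Submodule.Quotient.mk_eq_zero]
    simp
  rw [key] at h ⊢
  induction k with
  | zero => simp
  | succ k ih =>
    rw [Nat.mul_succ, pow_add, pow_succ, mul_comm (I ^ _), mul_comm (J ^ _), mul_smul, mul_smul]
    refine (Submodule.smul_mono le_rfl ih).trans ?_
    rw [← mul_smul, mul_comm, mul_smul, ← mul_smul J, mul_comm J, mul_smul]
    exact Submodule.smul_mono le_rfl h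

/-- The quotient of `V` by `n`-th powers is killed by a power of `m` that is linear in `n`. -/
lemma pow_le_annihilator_quot_ofList_pow {V : Type} [AddCommGroup V] [Module R V] (rs : List R)
    {c n : ℕ} (hn : n ≠ 0) (h : maximalIdeal R ^ c ≤
      Module.annihilator R (V ⧸ (Ideal.ofList rs • ⊤ : Submodule R V))) :
    maximalIdeal R ^ (c * ((rs.length + 1) * n)) ≤
      Module.annihilator R (V ⧸ (Ideal.ofList (rs.map (· ^ n)) • ⊤ : Submodule R V)) :=
  (pow_le_annihilator_quot_pow h _).trans (LinearMap.annihilator_le_of_surjective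
    (Submodule.factor (Submodule.smul_mono_left (ofList_pow_le rs hn)))
    (Submodule.factor_surjective _))

lemma pow_le_length_quot_ofList_pow {V : Type} [AddCommGroup V] [Module R V] {rs : List R}
    (h : RingTheory.Sequence.IsRegular V rs) {n : ℕ} (hn : n ≠ 0) :
    ((n ^ rs.length : ℕ) : ℕ∞) ≤
      Module.length R (V ⧸ (Ideal.ofList (rs.map (· ^ n)) • ⊤ : Submodule R V)) := by
  obtain ⟨n, rfl⟩ := Nat.exists_eq_succ_of_ne_zero hn
  have hnt : Nontrivial (V ⧸ (Ideal.ofList rs • ⊤ : Submodule R V)) :=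
    Submodule.Quotient.nontrivial_iff.2 h.top_ne_smul.symm
  have := (growthClass_length R).quot_ofList_pow rs h.toIsWeaklyRegular (a := 1) (by
    rw [Nat.cast_one, Order.one_le_iff_ne_zero]
    exact Module.length_pos.ne') n
  rwa [mul_one] at this

/-- The growth estimate behind `dim M + dim N ≤ dim R`. -/
lemma exists_pow_add_le_mul_pow [IsNoetherianRing R] {d : ℕ}
    (hfield : ∃ (K : Type) (_ : Field K), Nonempty (K →+* R)) (x : Fin d → R)
    (hx : Ideal.span (Set.range x) = maximalIdeal R)
    (M N : Type) [AddCommGroup M] [Module R M] [AddCommGroup N] [Module R N]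
    (hlen : IsFiniteLength R (M ⊗[R] N)) (ys zs : List R)
    (hys : RingTheory.Sequence.IsRegular M ys) (hzs : RingTheory.Sequence.IsRegular N zs)
    (hM : IsFiniteLength R (M ⧸ (Ideal.ofList ys • ⊤ : Submodule R M)))
    (hN : IsFiniteLength R (N ⧸ (Ideal.ofList zs • ⊤ : Submodule R N))) :
    ∃ C : ℕ, ∀ n, n ≠ 0 → n ^ (ys.length + zs.length) ≤ C * n ^ d := by
  obtain ⟨l, hl⟩ := ENat.ne_top_iff_exists.1 (Module.length_ne_top_iff.2 hlen)
  obtain ⟨c₁, hc₁⟩ := exists_pow_le_annihilator hM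
  obtain ⟨c₂, hc₂⟩ := exists_pow_le_annihilator hN
  let c := c₁ * (ys.length + 1) + c₂ * (zs.length + 1) + 1
  refine ⟨(2 * c) ^ d * l, fun n hn => ?_⟩
  have h1 := pow_le_length_quot_ofList_pow hys hn
  have h2 := pow_le_length_quot_ofList_pow hzs hn
  have hcM : c₁ * ((ys.length + 1) * n) ≤ c * n := by
    rw [← mul_assoc]
    exact Nat.mul_le_mul_right n (Nat.le_succ_of_le (Nat.le_add_right _ _))
  have hcN : c₂ * ((zs.length + 1) * n) ≤ c * n := by
    rw [← mul_assoc]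
    exact Nat.mul_le_mul_right n (Nat.le_succ_of_le (Nat.le_add_left _ _))
  have hq := TensorProduct.map_surjective
    (Submodule.mkQ_surjective (Ideal.ofList (ys.map (· ^ n)) • ⊤ : Submodule R M))
    (Submodule.mkQ_surjective (Ideal.ofList (zs.map (· ^ n)) • ⊤ : Submodule R N))
  have h3 := length_mul_length_le hfield x hx (a := c * n) (mul_ne_zero (by omega) hn)
    (isFiniteLength_quot_pow ys n hM) (isFiniteLength_quot_pow zs n hN)
    (hlen.of_surjective hq)
    ((Ideal.pow_le_pow_right hcM).trans (pow_le_annihilator_quot_ofList_pow ys hn hc₁))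
    ((Ideal.pow_le_pow_right hcN).trans (pow_le_annihilator_quot_ofList_pow zs hn hc₂))
  have h4 := (mul_le_mul' h1 h2).trans (h3.trans
    (mul_le_mul_right (Module.length_le_of_surjective _ hq) _))
  rw [← hl, ← Nat.cast_mul, ← Nat.cast_mul, Nat.cast_le] at h4
  rw [pow_add]
  refine h4.trans (le_of_eq ?_)
  rw [← mul_assoc 2, mul_pow (2 * c)]
  ring

end

end

/-! ### Cohen–Macaulay modules -/

section
open IsLocalRing

lemma le_of_forall_pow_le {p q C : ℕ} (h : ∀ n, n ≠ 0 → n ^ p ≤ C * n ^ q) : p ≤ q := by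
  by_contra! hpq
  have h1 := h (C + 1) (Nat.succ_ne_zero C)
  have h2 : (C + 1) ^ (q + 1) ≤ (C + 1) ^ p := Nat.pow_le_pow_right (Nat.succ_pos C) hpq
  have h3 : 0 < (C + 1) ^ q := Nat.pow_pos (Nat.succ_pos C)
  rw [pow_succ] at h2
  nlinarith

variable {R : Type} [CommRing R] [IsLocalRing R] [IsNoetherianRing R]

lemma isFiniteLength_of_supportDim_le_zero {Q : Type} [AddCommGroup Q] [Module R Q]
    [Module.Finite R Q] (h : Module.supportDim R Q ≤ 0) : IsFiniteLength R Q := by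
  rw [Module.supportDim_eq_ringKrullDim_quotient_annihilator] at h
  have : Ring.KrullDimLE 0 (R ⧸ Module.annihilator R Q) := by
    rw [Ring.krullDimLE_iff]; exact_mod_cast h
  have : IsArtinianRing (R ⧸ Module.annihilator R Q) :=
    IsNoetherianRing.isArtinianRing_of_krullDimLE_zero
  let _ : Module (R ⧸ Module.annihilator R Q) Q :=
    Module.IsTorsionBySet.module (I := Module.annihilator R Q)
      (fun v r => Module.mem_annihilator.1 r.2 v)
  have _ : IsScalarTower R (R ⧸ Module.annihilator R Q) Q := ⟨fun r b v => by
    obtain ⟨b, rfl⟩ := Ideal.Quotient.mk_surjective b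
    change (r * b) • v = r • (b • v)
    rw [mul_smul]⟩
  have : Module.Finite (R ⧸ Module.annihilator R Q) Q :=
    Module.Finite.of_restrictScalars_finite R _ _
  rw [← Module.length_ne_top_iff, Module.length_eq_of_surjective
    (R := R ⧸ Module.annihilator R Q) (S := R) Ideal.Quotient.mk_surjective,
    Module.length_ne_top_iff, isFiniteLength_iff_isNoetherian_isArtinian]
  exact ⟨inferInstance, inferInstance⟩

/-- A Cohen–Macaulay module has a regular sequence of length `dim M`, and the corresponding
quotient has finite length. -/
lemma exists_isRegular_of_isCohenMacaulayMod {M : Type} [AddCommGroup M] [Module R M]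
    [Module.Finite R M] [Nontrivial M] (h : IsCohenMacaulayMod R M) :
    ∃ rs : List R, (∀ r ∈ rs, r ∈ maximalIdeal R) ∧ RingTheory.Sequence.IsRegular M rs ∧
      moduleDim R M = (rs.length : WithBot (WithTop ℕ)) ∧
      IsFiniteLength R (M ⧸ (Ideal.ofList rs • ⊤ : Submodule R M)) := by
  have hdim : Module.supportDim R M = moduleDim R M :=
    Module.supportDim_eq_ringKrullDim_quotient_annihilator R M
  obtain ⟨m, hm⟩ : ∃ m : ℕ, moduleDim R M = (m : WithBot (WithTop ℕ)) := by
    have h1 : moduleDim R M ≠ ⊥ := hdim ▸ Module.supportDim_ne_bot_of_nontrivial R M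
    have h2 : moduleDim R M < ⊤ :=
      hdim ▸ (Module.supportDim_le_ringKrullDim R M).trans_lt ringKrullDim_lt_top
    generalize moduleDim R M = D at h1 h2
    induction D using WithBot.recBotCoe with
    | bot => exact absurd rfl h1
    | coe D =>
      induction D using WithTop.recTopCoe with
      | top => exact absurd rfl h2.ne
      | coe m => exact ⟨m, rfl⟩
  obtain ⟨rs, hrs, hreg, hlen⟩ : ∃ rs : List R, (∀ r ∈ rs, r ∈ maximalIdeal R) ∧
      RingTheory.Sequence.IsRegular M rs ∧ m ≤ rs.length := by
    rcases m with _ | m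
    · exact ⟨[], by simp, RingTheory.Sequence.IsRegular.nil R M, le_rfl⟩
    · have h1 : ((m : ℕ) : WithBot (WithTop ℕ)) < moduleDepth R M := by
        rw [h, hm]; exact_mod_cast Nat.lt_succ_self m
      obtain ⟨_, ⟨rs, hrs, hreg, rfl⟩, hlt⟩ := lt_sSup_iff.1 h1
      exact ⟨rs, hrs, hreg, by exact_mod_cast hlt⟩
  have hadd := Module.supportDim_add_length_eq_supportDim_of_isRegular rs hreg
  rw [hdim, hm] at hadd
  have hnt : Nontrivial (M ⧸ (Ideal.ofList rs • ⊤ : Submodule R M)) :=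
    Submodule.Quotient.nontrivial_iff.2 hreg.top_ne_smul.symm
  have h0 := Module.supportDim_ne_bot_of_nontrivial R
    (M ⧸ (Ideal.ofList rs • ⊤ : Submodule R M))
  have key : Module.supportDim R (M ⧸ (Ideal.ofList rs • ⊤ : Submodule R M)) ≤ 0 ∧
      m = rs.length := by
    generalize Module.supportDim R (M ⧸ (Ideal.ofList rs • ⊤ : Submodule R M)) = D at hadd h0
    induction D using WithBot.recBotCoe with
    | bot => exact absurd rfl h0
    | coe D =>
      induction D using WithTop.recTopCoe with
      | top => exact absurd (WithBot.coe_injective hadd) (WithTop.top_ne_natCast m)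
      | coe D =>
        have h3 : D + rs.length = m :=
          WithTop.coe_injective (WithBot.coe_injective hadd)
        have h4 : D = 0 := by omega
        subst h4
        exact ⟨le_rfl, by omega⟩
  exact ⟨rs, hrs, hreg, by rw [hm, key.2], isFiniteLength_of_supportDim_le_zero key.1⟩

end

theorem dim_add_dim_eq_dim_of_tor_vanishing (R : Type) [CommRing R] [IsLocalRing R]
    (hreg : IsRegularLocal R)
    (hfield : ∃ (K : Type) (_ : Field K), Nonempty (K →+* R))
    (M N : Type) [AddCommGroup M] [Module R M] [AddCommGroup N] [Module R N]
    [Module.Finite R M] [Module.Finite R N] [Nontrivial M] [Nontrivial N]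
    (hlen : IsFiniteLength R (M ⊗[R] N))
    (htor : Subsingleton
      (((Tor (ModuleCat R) 1).obj (ModuleCat.of R M)).obj (ModuleCat.of R N)))
    (hM : IsCohenMacaulayMod R M) (hN : IsCohenMacaulayMod R N) :
    moduleDim R M + moduleDim R N = ringKrullDim R := by
  obtain ⟨_, _, s, hs, hcard⟩ := hreg
  let x : Fin s.card → R := fun i => s.equivFin.symm i
  have hx : Ideal.span (Set.range x) = IsLocalRing.maximalIdeal R := by
    rw [← hs]
    congr 1
    ext r
    refine ⟨?_, fun hr => ⟨s.equivFin ⟨r, hr⟩, by simp [x]⟩⟩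
    rintro ⟨i, rfl⟩
    exact (s.equivFin.symm i).2
  have hxreg := (isDomain_and_isWeaklyRegular_of_generators (List.ofFn x)
    (by rw [ofList_ofFn, hx]) (by rw [List.length_ofFn]; exact hcard.le)).2
  obtain ⟨ys, hys, hyreg, hym, hyl⟩ := exists_isRegular_of_isCohenMacaulayMod hM
  obtain ⟨zs, hzs, hzreg, hzn, hzl⟩ := exists_isRegular_of_isCohenMacaulayMod hN
  obtain ⟨C, hC⟩ := exists_pow_le_mul_pow_add hfield x hx hxreg M N hlen htor ys zs hys hzs hyl hzl
  obtain ⟨C', hC'⟩ := exists_pow_add_le_mul_pow hfield x hx M N hlen ys zs hyreg hzreg hyl hzl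
  rw [hym, hzn, ← hcard, le_antisymm (le_of_forall_pow_le hC) (le_of_forall_pow_le hC')]
  push_cast
  rfl
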